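/- Let (A, {Δ(λ)}) be a split quasi-hereditary algebra over a commutative Noetherian ring R and T a characteristic tilting module. Then: (a) F(Δ̃) = {M ∈ A-mod ∩ R-proj : Ext^i_A(M, T) = 0 for all i > 0}; (b) F(∇̃) = {N ∈ A-mod ∩ R-proj : Ext^i_A(T, N) = 0 for all i > 0}; and (c) add T = F(Δ̃) ∩ F(∇̃). -/

import Mathlib

open scoped TensorProduct
open CategoryTheory

noncomputable section

section Core

variable (R : Type) [CommRing R] (A : Type) [Ring A] [Algebra R A]

/-- The action of `a : A` on an `A`-module as an `R`-linear endomorphism. -/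
def actL (M : Type) [AddCommGroup M] [Module R M] [Module A M] [IsScalarTower R A M]
    (a : A) : M →ₗ[R] M where
  toFun m := a • m
  map_add' := smul_add a
  map_smul' r m := (smul_comm r a m).symm

/-- The right `A`-module (i.e. `Aᵐᵒᵖ`-module) structure on the `R`-linear dual of a left
`A`-module `M`, given by `(aᵒᵖ • f) m = f (a • m)`. -/
instance dualModule (M : Type) [AddCommGroup M] [Module R M] [Module A M]
    [IsScalarTower R A M] : Module Aᵐᵒᵖ (M →ₗ[R] R) where
  smul a f := f.comp (actL R A M a.unop)
  one_smul f := by ext m; show f ((1 : Aᵐᵒᵖ).unop • m) = f m; simp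
  mul_smul a b f := by
    ext m
    show f ((a * b).unop • m) = f (b.unop • a.unop • m)
    simp [mul_smul]
  smul_zero a := rfl
  smul_add a f g := rfl
  add_smul a b f := by
    ext m
    show f ((a + b).unop • m) = f (a.unop • m) + f (b.unop • m)
    simp [add_smul]
  zero_smul f := by ext m; show f ((0 : Aᵐᵒᵖ).unop • m) = 0; simp

@[simp] lemma dualModule_smul_apply (M : Type) [AddCommGroup M] [Module R M] [Module A M]
    [IsScalarTower R A M] (a : Aᵐᵒᵖ) (f : M →ₗ[R] R) (m : M) :
    (a • f) m = f (a.unop • m) := rfl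

instance dualTower (M : Type) [AddCommGroup M] [Module R M] [Module A M]
    [IsScalarTower R A M] : IsScalarTower R Aᵐᵒᵖ (M →ₗ[R] R) := by
  constructor
  intro r a f
  ext m
  show f ((r • a).unop • m) = r • f (a.unop • m)
  rw [MulOpposite.unop_smul, smul_assoc, map_smul]

/-- The left `A`-module structure on the `R`-linear dual of a right `A`-module
(i.e. an `Aᵐᵒᵖ`-module) `M`, given by `(a • f) m = f (aᵒᵖ • m)`. -/
instance dualModule' (M : Type) [AddCommGroup M] [Module R M] [Module Aᵐᵒᵖ M]
    [IsScalarTower R Aᵐᵒᵖ M] : Module A (M →ₗ[R] R) where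
  smul a f := f.comp (actL R Aᵐᵒᵖ M (MulOpposite.op a))
  one_smul f := by ext m; show f (MulOpposite.op (1 : A) • m) = f m; simp
  mul_smul a b f := by
    ext m
    show f (MulOpposite.op (a * b) • m) = f (MulOpposite.op b • MulOpposite.op a • m)
    rw [MulOpposite.op_mul, mul_smul]
  smul_zero a := rfl
  smul_add a f g := rfl
  add_smul a b f := by
    ext m
    show f (MulOpposite.op (a + b) • m) = f (MulOpposite.op a • m) + f (MulOpposite.op b • m)
    rw [MulOpposite.op_add, add_smul, map_add]
  zero_smul f := by ext m; show f (MulOpposite.op (0 : A) • m) = 0; simp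

@[simp] lemma dualModule'_smul_apply (M : Type) [AddCommGroup M] [Module R M] [Module Aᵐᵒᵖ M]
    [IsScalarTower R Aᵐᵒᵖ M] (a : A) (f : M →ₗ[R] R) (m : M) :
    (a • f) m = f (MulOpposite.op a • m) := rfl

instance dualTower' (M : Type) [AddCommGroup M] [Module R M] [Module Aᵐᵒᵖ M]
    [IsScalarTower R Aᵐᵒᵖ M] : IsScalarTower R A (M →ₗ[R] R) := by
  constructor
  intro r a f
  ext m
  show f (MulOpposite.op (r • a) • m) = r • f (MulOpposite.op a • m)
  rw [MulOpposite.op_smul, smul_assoc, map_smul]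

variable (Λ : Type) [Fintype Λ] [PartialOrder Λ]

/-- Data witnessing that `X` is isomorphic to `Δ(λ) ⊗_R U` for some `λ ∈ S` and some finitely
generated projective `R`-module `U`. -/
structure TensorFactor (Δ : Λ → Type) [∀ l, AddCommGroup (Δ l)] [∀ l, Module R (Δ l)]
    [∀ l, Module A (Δ l)] [∀ l, IsScalarTower R A (Δ l)]
    (S : Set Λ) (X : Type) [AddCommGroup X] [Module A X] : Type 1 where
  lam : Λ
  mem : lam ∈ S
  U : ModuleCat.{0} R
  fin : Module.Finite R U
  proj : Module.Projective R U
  iso : X ≃ₗ[A] (TensorProduct R (Δ lam) U)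

/-- `M` belongs to `F(Δ̃_S)`: it is a finitely generated `A`-module with a finite filtration
whose factors are of the form `Δ(λ) ⊗_R U`, `λ ∈ S`, `U` a finitely generated projective
`R`-module. -/
def InFilt (Δ : Λ → Type) [∀ l, AddCommGroup (Δ l)] [∀ l, Module R (Δ l)]
    [∀ l, Module A (Δ l)] [∀ l, IsScalarTower R A (Δ l)]
    (S : Set Λ) (M : Type) [AddCommGroup M] [Module A M] : Prop :=
  Module.Finite A M ∧
  ∃ (n : ℕ) (c : Fin (n + 1) → Submodule A M), c 0 = ⊥ ∧ c (Fin.last n) = ⊤ ∧ Monotone c ∧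
    ∀ i : Fin n, Nonempty (TensorFactor R A Λ Δ S
      (↥(c i.succ) ⧸ (Submodule.comap (c i.succ).subtype (c i.castSucc))))

/-- Data witnessing that `X` is isomorphic to `F(λ)` for some `λ ∈ S`. -/
structure PlainFactor (F : Λ → Type) [∀ l, AddCommGroup (F l)] [∀ l, Module A (F l)]
    (S : Set Λ) (X : Type) [AddCommGroup X] [Module A X] : Type 1 where
  lam : Λ
  mem : lam ∈ S
  iso : X ≃ₗ[A] F lam

/-- `M` has a finite filtration with factors among the modules `F(λ)`, `λ ∈ S`. -/
def InFiltPlain (F : Λ → Type) [∀ l, AddCommGroup (F l)] [∀ l, Module A (F l)]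
    (S : Set Λ) (M : Type) [AddCommGroup M] [Module A M] : Prop :=
  Module.Finite A M ∧
  ∃ (n : ℕ) (c : Fin (n + 1) → Submodule A M), c 0 = ⊥ ∧ c (Fin.last n) = ⊤ ∧ Monotone c ∧
    ∀ i : Fin n, Nonempty (PlainFactor A Λ F S
      (↥(c i.succ) ⧸ (Submodule.comap (c i.succ).subtype (c i.castSucc))))

/-- `X` is a direct summand of `Y` (as `A`-modules). -/
def IsDirectSummand (X Y : Type) [AddCommGroup X] [Module A X] [AddCommGroup Y]
    [Module A Y] : Prop :=
  ∃ (i : X →ₗ[A] Y) (p : Y →ₗ[A] X), p.comp i = LinearMap.id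

/-- `X` belongs to the additive closure `add T`. -/
def InAdd (T : Type) [AddCommGroup T] [Module A T] (X : Type) [AddCommGroup X]
    [Module A X] : Prop :=
  ∃ n : ℕ, IsDirectSummand A X (Fin n → T)

/-- A split quasi-hereditary structure on the `R`-algebra `A` with standard modules
`Δ(λ)`, `λ ∈ Λ` (following Rouquier's module-theoretic definition). -/
structure SplitQH (Δ : Λ → Type) [∀ l, AddCommGroup (Δ l)] [∀ l, Module R (Δ l)]
    [∀ l, Module A (Δ l)] [∀ l, IsScalarTower R A (Δ l)] : Type 1 where
  algFin : Module.Finite R A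
  algProj : Module.Projective R A
  deltaFinA : ∀ l, Module.Finite A (Δ l)
  deltaFinR : ∀ l, Module.Finite R (Δ l)
  deltaProjR : ∀ l, Module.Projective R (Δ l)
  hom_le : ∀ l m : Λ, (∃ f : Δ l →ₗ[A] Δ m, f ≠ 0) → l ≤ m
  endIso : ∀ l, Nonempty ((Module.End A (Δ l)) ≃ₐ[R] R)
  P : Λ → ModuleCat.{0} A
  P_proj : ∀ l, Module.Projective A (P l)
  P_fin : ∀ l, Module.Finite A (P l)
  epi : ∀ l, (P l : Type) →ₗ[A] Δ l
  epi_surj : ∀ l, Function.Surjective (epi l)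
  ker_filt : ∀ l, InFilt R A Λ Δ {m | l < m} ↥(LinearMap.ker (epi l))
  add_gen : ∀ (Q : ModuleCat.{0} A), Module.Finite A Q → Module.Projective A Q →
    InAdd A (∀ l, (P l : Type)) Q

/-- Vanishing of `Ext^i_A(M, N)` (computed in the abelian category of `A`-modules). -/
def extVanish (M : Type) [AddCommGroup M] [Module A M] (N : Type) [AddCommGroup N]
    [Module A N] (i : ℕ) : Prop :=
  Subsingleton (((Ext ℤ (ModuleCat.{0} A) i).obj
    (Opposite.op (ModuleCat.of A M))).obj (ModuleCat.of A N))

/-- `∇` is a family of costandard modules for the split quasi-hereditary algebra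
`(A, {Δ(λ)})`: the `R`-linear duals `D∇(λ)` make `A^op` split quasi-hereditary (with the same
poset), and the `Ext`-orthogonality relations with the standard modules hold. -/
def IsCostandard (Δ : Λ → Type) [∀ l, AddCommGroup (Δ l)] [∀ l, Module R (Δ l)]
    [∀ l, Module A (Δ l)] [∀ l, IsScalarTower R A (Δ l)]
    (N : Λ → Type) [∀ l, AddCommGroup (N l)] [∀ l, Module R (N l)]
    [∀ l, Module A (N l)] [∀ l, IsScalarTower R A (N l)] : Prop :=
  Nonempty (SplitQH R Aᵐᵒᵖ Λ (fun l => (N l →ₗ[R] R))) ∧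
  (∀ l, Nonempty ((Δ l →ₗ[A] N l) ≃ₗ[R] R)) ∧
  (∀ l m, l ≠ m → ∀ f : Δ l →ₗ[A] N m, f = 0) ∧
  (∀ l m : Λ, ∀ i : ℕ, 0 < i → extVanish A (Δ l) (N m) i)

/-- A bundled family of costandard modules. -/
structure CostandardFamily (Δ : Λ → Type) [∀ l, AddCommGroup (Δ l)] [∀ l, Module R (Δ l)]
    [∀ l, Module A (Δ l)] [∀ l, IsScalarTower R A (Δ l)] : Type 1 where
  Nab : Λ → Type
  [acg : ∀ l, AddCommGroup (Nab l)]
  [modR : ∀ l, Module R (Nab l)]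
  [modA : ∀ l, Module A (Nab l)]
  [tower : ∀ l, IsScalarTower R A (Nab l)]
  cost : IsCostandard R A Λ Δ Nab

attribute [instance] CostandardFamily.acg CostandardFamily.modR CostandardFamily.modA
  CostandardFamily.tower

/-- `T` is a family of (partial) tilting modules forming a characteristic tilting module
`⊕ T(λ)`: each `T(λ)` admits an exact sequence `0 → Δ(λ) → T(λ) → X(λ) → 0` with
`X(λ) ∈ F(Δ̃_{μ<λ})` and an exact sequence `0 → Y(λ) → T(λ) → ∇(λ) → 0` with
`Y(λ) ∈ F(∇̃_{μ<λ})`. -/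
def IsCharTilting (Δ : Λ → Type) [∀ l, AddCommGroup (Δ l)] [∀ l, Module R (Δ l)]
    [∀ l, Module A (Δ l)] [∀ l, IsScalarTower R A (Δ l)]
    (N : Λ → Type) [∀ l, AddCommGroup (N l)] [∀ l, Module R (N l)]
    [∀ l, Module A (N l)] [∀ l, IsScalarTower R A (N l)]
    (T : Λ → Type) [∀ l, AddCommGroup (T l)] [∀ l, Module A (T l)] : Prop :=
  ∀ l : Λ,
    (∃ f : Δ l →ₗ[A] T l, Function.Injective f ∧
      InFilt R A Λ Δ {m | m < l} ((T l) ⧸ LinearMap.range f)) ∧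
    (∃ g : T l →ₗ[A] N l, Function.Surjective g ∧
      InFilt R A Λ N {m | m < l} ↥(LinearMap.ker g))

end Core

end

noncomputable section

section ExtVanishing

variable {A : Type} [Ring A]

lemma extVanish_succ_iff_subsingleton_ext (M : Type) [AddCommGroup M] [Module A M]
    (N : Type) [AddCommGroup N] [Module A N] (i : ℕ) :
    extVanish A M N (i + 1) ↔
      Subsingleton (Abelian.Ext (ModuleCat.of A M) (ModuleCat.of A N) (i + 1)) := by
  let P := projectiveResolution (ModuleCat.of A M)
  have key : extVanish A M N (i + 1) ↔ ∀ f : P.complex.X (i + 1) ⟶ ModuleCat.of A N,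
      P.complex.d (i + 2) (i + 1) ≫ f = 0 →
      ∃ g : P.complex.X i ⟶ ModuleCat.of A N, P.complex.d (i + 1) i ≫ g = f := by
    rw [extVanish,
      (P.isoExt (R := ℤ) (i + 1) (ModuleCat.of A N)).toLinearEquiv.toEquiv.subsingleton_congr,
      ← ModuleCat.isZero_iff_subsingleton, ← HomologicalComplex.exactAt_iff_isZero_homology,
      HomologicalComplex.exactAt_iff' _ i (i + 1) (i + 2) (by simp) (by simp),
      ShortComplex.moduleCat_exact_iff]
    rfl
  rw [key]
  constructor
  · intro h
    refine subsingleton_of_forall_eq 0 fun x => ?_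
    obtain ⟨f, hf, rfl⟩ := P.extMk_surjective x (i + 2) rfl
    exact (P.extMk_eq_zero_iff f (i + 2) rfl hf i rfl).2 (h f hf)
  · intro h f hf
    exact (P.extMk_eq_zero_iff f (i + 2) rfl hf i rfl).1 (Subsingleton.elim _ _)

variable {M' M M'' N : Type} [AddCommGroup M'] [Module A M'] [AddCommGroup M] [Module A M]
  [AddCommGroup M''] [Module A M''] [AddCommGroup N] [Module A N]

/-- Vanishing of `Ext^i(M, N)` in terms of Mathlib's derived-category `Ext`. -/
def ExtZero (A : Type) [Ring A] (M N : Type) [AddCommGroup M] [Module A M]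
    [AddCommGroup N] [Module A N] (i : ℕ) : Prop :=
  ∀ x : Abelian.Ext (ModuleCat.of A M) (ModuleCat.of A N) i, x = 0

lemma extVanish_iff_extZero (i : ℕ) (hi : 0 < i) : extVanish A M N i ↔ ExtZero A M N i := by
  obtain ⟨i, rfl⟩ := Nat.exists_eq_succ_of_ne_zero hi.ne'
  rw [Nat.succ_eq_add_one, extVanish_succ_iff_subsingleton_ext]
  exact ⟨fun h x => Subsingleton.elim _ _, fun h => subsingleton_of_forall_eq 0 h⟩

lemma ExtZero.of_sum_left {ι : Type} [Fintype ι] {F : ι → Type} [∀ i, AddCommGroup (F i)]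
    [∀ i, Module A (F i)] (a : ∀ i, F i →ₗ[A] M) (b : ∀ i, M →ₗ[A] F i)
    (hab : ∑ i, a i ∘ₗ b i = LinearMap.id) {n : ℕ} (h : ∀ i, ExtZero A (F i) N n) :
    ExtZero A M N n := by
  intro x
  have hid : 𝟙 (ModuleCat.of A M) = ∑ i, ModuleCat.ofHom (b i) ≫ ModuleCat.ofHom (a i) := by
    ext m
    simpa [ModuleCat.hom_sum] using (LinearMap.congr_fun hab m).symm
  rw [← Abelian.Ext.mk₀_id_comp x, hid, Abelian.Ext.mk₀_sum, Abelian.Ext.sum_comp]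
  refine Finset.sum_eq_zero fun i _ => ?_
  rw [← Abelian.Ext.mk₀_comp_mk₀, Abelian.Ext.comp_assoc _ _ _ (zero_add 0) (zero_add n) (by simp),
    h i ((Abelian.Ext.mk₀ (ModuleCat.ofHom (a i))).comp x (zero_add n)), Abelian.Ext.comp_zero]

lemma ExtZero.of_sum_right {ι : Type} [Fintype ι] {F : ι → Type} [∀ i, AddCommGroup (F i)]
    [∀ i, Module A (F i)] (a : ∀ i, F i →ₗ[A] N) (b : ∀ i, N →ₗ[A] F i)
    (hab : ∑ i, a i ∘ₗ b i = LinearMap.id) {n : ℕ} (h : ∀ i, ExtZero A M (F i) n) :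
    ExtZero A M N n := by
  intro x
  have hid : 𝟙 (ModuleCat.of A N) = ∑ i, ModuleCat.ofHom (b i) ≫ ModuleCat.ofHom (a i) := by
    ext m
    simpa [ModuleCat.hom_sum] using (LinearMap.congr_fun hab m).symm
  rw [← Abelian.Ext.comp_mk₀_id x, hid, Abelian.Ext.mk₀_sum, Abelian.Ext.comp_sum]
  refine Finset.sum_eq_zero fun i _ => ?_
  rw [← Abelian.Ext.mk₀_comp_mk₀, ← Abelian.Ext.comp_assoc _ _ _ (add_zero n) (zero_add 0)
      (by simp),
    h i (x.comp (Abelian.Ext.mk₀ (ModuleCat.ofHom (b i))) (add_zero n)), Abelian.Ext.zero_comp]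

lemma ExtZero.of_projective [Module.Projective A M] (n : ℕ) : ExtZero A M N (n + 1) := by
  have : Projective (ModuleCat.of A M) := (IsProjective.iff_projective (R := A) M).1 inferInstance
  exact fun x => x.eq_zero_of_projective

/-- A short exact sequence of modules. -/
structure IsSES (f : M' →ₗ[A] M) (g : M →ₗ[A] M'') : Prop where
  inj : Function.Injective f
  exact : Function.Exact f g
  surj : Function.Surjective g

lemma IsSES.ker_subtype {g : M →ₗ[A] M''} (hg : Function.Surjective g) :
    IsSES (LinearMap.ker g).subtype g :=
  ⟨Submodule.injective_subtype _, by rw [LinearMap.exact_iff]; simp, hg⟩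

lemma IsSES.range_mkQ {f : M' →ₗ[A] M} (hf : Function.Injective f) :
    IsSES f (LinearMap.range f).mkQ :=
  ⟨hf, by rw [LinearMap.exact_iff]; simp, Submodule.mkQ_surjective _⟩

variable {f : M' →ₗ[A] M} {g : M →ₗ[A] M''}

/-- The short complex in `ModuleCat` attached to a short exact sequence of modules. -/
abbrev IsSES.complex (s : IsSES f g) : ShortComplex (ModuleCat.{0} A) :=
  ShortComplex.mk (ModuleCat.ofHom f) (ModuleCat.ofHom g) (by
    ext m
    exact s.exact.apply_apply_eq_zero m)

lemma IsSES.shortExact (s : IsSES f g) : s.complex.ShortExact where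
  exact := (ShortComplex.ShortExact.moduleCat_exact_iff_function_exact _).2 s.exact
  mono_f := (ModuleCat.mono_iff_injective _).2 s.inj
  epi_g := (ModuleCat.epi_iff_surjective _).2 s.surj

lemma IsSES.extZero_mid (s : IsSES f g) {n : ℕ} (h' : ExtZero A M' N n) (h'' : ExtZero A M'' N n) :
    ExtZero A M N n := by
  intro x
  obtain ⟨y, rfl⟩ := Abelian.Ext.contravariant_sequence_exact₂ s.shortExact
    (ModuleCat.of A N) x (h' _)
  rw [h'' y, Abelian.Ext.comp_zero]

lemma IsSES.extZero_left (s : IsSES f g) {n : ℕ} (h : ExtZero A M N n)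
    (h'' : ExtZero A M'' N (n + 1)) : ExtZero A M' N n := by
  intro x
  obtain ⟨y, rfl⟩ := Abelian.Ext.contravariant_sequence_exact₁ s.shortExact
    (ModuleCat.of A N) x (add_comm 1 n) (h'' _)
  rw [h y, Abelian.Ext.comp_zero]

lemma IsSES.extZero_right (s : IsSES f g) {n : ℕ} (h' : ExtZero A M' N n)
    (h : ExtZero A M N (n + 1)) : ExtZero A M'' N (n + 1) := by
  intro x
  obtain ⟨y, rfl⟩ := Abelian.Ext.contravariant_sequence_exact₃ s.shortExact
    (ModuleCat.of A N) x (h _) (add_comm 1 n)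
  rw [h' y, Abelian.Ext.comp_zero]

lemma IsSES.exists_extend (s : IsSES f g) (h'' : ExtZero A M'' N 1) (u : M' →ₗ[A] N) :
    ∃ v : M →ₗ[A] N, v ∘ₗ f = u := by
  obtain ⟨y, hy⟩ := Abelian.Ext.contravariant_sequence_exact₁ s.shortExact
    (ModuleCat.of A N) (Abelian.Ext.mk₀ (ModuleCat.ofHom u)) (add_zero 1) (h'' _)
  obtain ⟨v, rfl⟩ := (Abelian.Ext.mk₀_bijective _ _).2 y
  rw [Abelian.Ext.mk₀_comp_mk₀] at hy
  exact ⟨v.hom, congrArg ModuleCat.Hom.hom ((Abelian.Ext.mk₀_bijective _ _).1 hy)⟩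

lemma IsSES.extZero_one_right (s : IsSES f g) (h : ∀ u : M' →ₗ[A] N, ∃ v : M →ₗ[A] N, v ∘ₗ f = u)
    (h1 : ExtZero A M N 1) : ExtZero A M'' N 1 := by
  intro x
  obtain ⟨y, rfl⟩ := Abelian.Ext.contravariant_sequence_exact₃ s.shortExact
    (ModuleCat.of A N) x (h1 _) (add_zero 1)
  obtain ⟨u, rfl⟩ := (Abelian.Ext.mk₀_bijective _ _).2 y
  obtain ⟨v, hv⟩ := h u.hom
  have : u = s.complex.f ≫ ModuleCat.ofHom v := by
    ext m
    exact (LinearMap.congr_fun hv m).symm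
  rw [this, ← Abelian.Ext.mk₀_comp_mk₀, s.shortExact.extClass_comp_assoc]

lemma IsSES.extZero_mid' (s : IsSES f g) {n : ℕ} (h' : ExtZero A N M' n)
    (h'' : ExtZero A N M'' n) : ExtZero A N M n := by
  intro x
  obtain ⟨y, rfl⟩ := Abelian.Ext.covariant_sequence_exact₂ (ModuleCat.of A N) s.shortExact
    x (h'' _)
  rw [h' y, Abelian.Ext.zero_comp]

lemma IsSES.extZero_right' (s : IsSES f g) {n : ℕ} (h : ExtZero A N M n)
    (h' : ExtZero A N M' (n + 1)) : ExtZero A N M'' n := by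
  intro x
  obtain ⟨y, rfl⟩ := Abelian.Ext.covariant_sequence_exact₃ (ModuleCat.of A N) s.shortExact
    x rfl (h' _)
  rw [h y, Abelian.Ext.zero_comp]

lemma IsSES.extZero_left' (s : IsSES f g) {n : ℕ} (h'' : ExtZero A N M'' n)
    (h : ExtZero A N M (n + 1)) : ExtZero A N M' (n + 1) := by
  intro x
  obtain ⟨y, rfl⟩ := Abelian.Ext.covariant_sequence_exact₁ (ModuleCat.of A N) s.shortExact
    x (h _) rfl
  rw [h'' y, Abelian.Ext.zero_comp]

lemma IsSES.exists_lift (s : IsSES f g) (h' : ExtZero A N M' 1) (u : N →ₗ[A] M'') :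
    ∃ v : N →ₗ[A] M, g ∘ₗ v = u := by
  obtain ⟨y, hy⟩ := Abelian.Ext.covariant_sequence_exact₃ (ModuleCat.of A N) s.shortExact
    (Abelian.Ext.mk₀ (ModuleCat.ofHom u)) (zero_add 1) (h' _)
  obtain ⟨v, rfl⟩ := (Abelian.Ext.mk₀_bijective _ _).2 y
  rw [Abelian.Ext.mk₀_comp_mk₀] at hy
  exact ⟨v.hom, congrArg ModuleCat.Hom.hom ((Abelian.Ext.mk₀_bijective _ _).1 hy)⟩

lemma IsSES.extZero_one_left' (s : IsSES f g)
    (h : ∀ u : N →ₗ[A] M'', ∃ v : N →ₗ[A] M, g ∘ₗ v = u)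
    (h1 : ExtZero A N M 1) : ExtZero A N M' 1 := by
  intro x
  obtain ⟨y, rfl⟩ := Abelian.Ext.covariant_sequence_exact₁ (ModuleCat.of A N) s.shortExact
    x (h1 _) (zero_add 1)
  obtain ⟨u, rfl⟩ := (Abelian.Ext.mk₀_bijective _ _).2 y
  obtain ⟨v, hv⟩ := h u.hom
  have : u = ModuleCat.ofHom v ≫ s.complex.g := by
    ext m
    exact (LinearMap.congr_fun hv m).symm
  rw [this, ← Abelian.Ext.mk₀_comp_mk₀, Abelian.Ext.comp_assoc _ _ _ (zero_add 0) (zero_add 1)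
      (by simp),
    s.shortExact.comp_extClass, Abelian.Ext.comp_zero]

end ExtVanishing

end

noncomputable section

section ProjectiveExtensions

variable {R : Type} [Ring R] {M' M M'' : Type} [AddCommGroup M'] [Module R M']
  [AddCommGroup M] [Module R M] [AddCommGroup M''] [Module R M'']
  {f : M' →ₗ[R] M} {g : M →ₗ[R] M''}

lemma IsSES.exists_retraction (s : IsSES f g) [Module.Projective R M''] :
    ∃ r : M →ₗ[R] M', r ∘ₗ f = LinearMap.id :=
  s.exists_extend (ExtZero.of_projective 0) LinearMap.id

lemma IsSES.projective_mid (s : IsSES f g) [Module.Projective R M'] [Module.Projective R M''] :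
    Module.Projective R M := by
  obtain ⟨r, hr⟩ := s.exists_retraction
  obtain ⟨t, ht⟩ := Module.projective_lifting_property g LinearMap.id s.surj
  refine Module.Projective.of_split (M := M' × M'') (r.prod g)
    ((f.coprod (t - f ∘ₗ r ∘ₗ t))) ?_
  ext m
  have h1 : g (m - t (g m)) = 0 := by
    simpa [sub_eq_zero] using (LinearMap.congr_fun ht (g m)).symm
  obtain ⟨x, hx⟩ := (s.exact _).1 h1
  have h2 : r (m - t (g m)) = x := by rw [← hx]; exact LinearMap.congr_fun hr x
  rw [← h2, map_sub, map_sub] at hx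
  simp only [LinearMap.comp_apply, LinearMap.prod_apply, Function.prod, LinearMap.coprod_apply,
    LinearMap.sub_apply, LinearMap.id_apply]
  rw [add_sub_left_comm, hx]
  abel

lemma IsSES.projective_left (s : IsSES f g) [Module.Projective R M] [Module.Projective R M''] :
    Module.Projective R M' := by
  obtain ⟨r, hr⟩ := s.exists_retraction
  exact Module.Projective.of_split f r hr

lemma IsSES.finite_mid (s : IsSES f g) [Module.Finite R M'] [Module.Finite R M''] :
    Module.Finite R M := by
  have : Module.Finite R (LinearMap.range f) := Module.Finite.range f
  have h : LinearMap.range f = LinearMap.ker g := (LinearMap.exact_iff.1 s.exact).symm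
  have : Module.Finite R (M ⧸ LinearMap.range f) := by
    rw [h]
    exact Module.Finite.equiv (g.quotKerEquivOfSurjective s.surj).symm
  exact Module.Finite.of_submodule_quotient (LinearMap.range f)

lemma Module.Finite.of_sum_eq_id {ι : Type} [Fintype ι] {F : ι → Type} [∀ i, AddCommGroup (F i)]
    [∀ i, Module R (F i)] (a : ∀ i, F i →ₗ[R] M) (b : ∀ i, M →ₗ[R] F i)
    (hab : ∑ i, a i ∘ₗ b i = LinearMap.id) [∀ i, Module.Finite R (F i)] : Module.Finite R M := by
  classical
  refine Module.Finite.of_surjective (LinearMap.lsum R F ℕ a) fun m => ⟨fun i => b i m, ?_⟩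
  simpa [LinearMap.lsum_apply] using LinearMap.congr_fun hab m

lemma Module.Projective.of_sum_eq_id {ι : Type} [Fintype ι] {F : ι → Type}
    [∀ i, AddCommGroup (F i)]
    [∀ i, Module R (F i)] (a : ∀ i, F i →ₗ[R] M) (b : ∀ i, M →ₗ[R] F i)
    (hab : ∑ i, a i ∘ₗ b i = LinearMap.id) [∀ i, Module.Projective R (F i)] :
    Module.Projective R M := by
  classical
  have := Module.Projective.of_equiv (DirectSum.linearEquivFunOnFintype R ι F)
  refine Module.Projective.of_split (LinearMap.pi b) (LinearMap.lsum R F ℕ a) ?_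
  rw [← hab]
  ext m
  simp [LinearMap.lsum_apply]

/-- Dual basis of a finitely generated projective module. -/
lemma Module.Projective.exists_dual_basis (P : Type) [AddCommGroup P] [Module R P]
    [Module.Finite R P] [Module.Projective R P] :
    ∃ (n : ℕ) (p : Fin n → P) (q : Fin n → (P →ₗ[R] R)), ∀ x, ∑ i, q i x • p i = x := by
  obtain ⟨n, f, g, -, -, h⟩ := Module.Finite.exists_comp_eq_id_of_projective R P
  refine ⟨n, fun i => f (Pi.single i 1), fun i => LinearMap.proj i ∘ₗ g, fun x => ?_⟩
  conv_rhs => rw [← LinearMap.id_apply (R := R) x, ← h, LinearMap.comp_apply,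
    LinearMap.pi_apply_eq_sum_univ]
  refine Finset.sum_congr rfl fun i _ => ?_
  congr 1
  refine congrArg f (funext fun j => ?_)
  simp [Pi.single_apply, eq_comm]

end ProjectiveExtensions

section Filtrations

set_option linter.unusedSectionVars false

variable {R : Type} [CommRing R] {A : Type} [Ring A] [Algebra R A]

section Tensor

variable {X U : Type} [AddCommGroup X] [Module R X] [Module A X] [IsScalarTower R A X]
  [AddCommGroup U] [Module R U]

variable (R A X) in
/-- The map `x ↦ x ⊗ u`. -/
def tensorIn : U →ₗ[R] X →ₗ[A] X ⊗[R] U where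
  toFun u := (TensorProduct.AlgebraTensorModule.mk R A X U).flip u
  map_add' u v := by ext; simp
  map_smul' r u := by ext; simp

variable (A X) in
/-- The map `x ⊗ u ↦ q(u) x`. -/
def tensorOut (q : U →ₗ[R] R) : X ⊗[R] U →ₗ[A] X :=
  (TensorProduct.AlgebraTensorModule.rid R A X).toLinearMap ∘ₗ
    TensorProduct.AlgebraTensorModule.lTensor A X q

@[simp] lemma tensorIn_apply (u : U) (x : X) : tensorIn R A X u x = x ⊗ₜ[R] u := rfl

@[simp] lemma tensorOut_tmul (q : U →ₗ[R] R) (x : X) (u : U) :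
    tensorOut A X q (x ⊗ₜ[R] u) = q u • x := by
  simp [tensorOut]

lemma tensorOut_comp_tensorIn (q : U →ₗ[R] R) (u : U) :
    tensorOut A X q ∘ₗ tensorIn R A X u = q u • LinearMap.id := by
  ext
  simp

lemma sum_tensorIn_comp_tensorOut {n : ℕ} (u : Fin n → U) (q : Fin n → (U →ₗ[R] R))
    (h : ∀ x, ∑ i, q i x • u i = x) :
    ∑ i, tensorIn R A X (u i) ∘ₗ tensorOut A X (q i) = LinearMap.id := by
  ext x v
  have hv : x ⊗ₜ[R] v = ∑ i, (q i v • x) ⊗ₜ[R] u i := by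
    conv_lhs => rw [← h v, TensorProduct.tmul_sum]
    simp_rw [TensorProduct.smul_tmul]
  simpa [TensorProduct.smul_tmul'] using hv.symm

end Tensor

lemma tensor_sum_eq_id (X U : Type) [AddCommGroup X] [Module R X] [Module A X]
    [IsScalarTower R A X] [AddCommGroup U] [Module R U] [Module.Finite R U]
    [Module.Projective R U] :
    ∃ (n : ℕ) (a : Fin n → (X →ₗ[A] X ⊗[R] U)) (b : Fin n → (X ⊗[R] U →ₗ[A] X)),
      ∑ i, a i ∘ₗ b i = LinearMap.id := by
  obtain ⟨n, u, q, h⟩ := Module.Projective.exists_dual_basis (R := R) U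
  exact ⟨n, _, _, sum_tensorIn_comp_tensorOut u q h⟩

variable {Λ : Type} [Fintype Λ] [PartialOrder Λ]
  {Δ : Λ → Type} [∀ l, AddCommGroup (Δ l)] [∀ l, Module R (Δ l)]
  [∀ l, Module A (Δ l)] [∀ l, IsScalarTower R A (Δ l)] {S : Set Λ}
  {M' M M'' : Type} [AddCommGroup M'] [Module A M']
  [AddCommGroup M] [Module A M] [AddCommGroup M''] [Module A M'']
  {f : M' →ₗ[A] M} {g : M →ₗ[A] M''}

variable (R A Λ Δ S) in
/-- `d / c` is of the form `Δ(λ) ⊗ U`. -/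
def FiltStep (M : Type) [AddCommGroup M] [Module A M] (c d : Submodule A M) : Prop :=
  c ≤ d ∧ ∃ l ∈ S, ∃ U : ModuleCat.{0} R, Module.Finite R U ∧ Module.Projective R U ∧
    ∃ p : d →ₗ[A] Δ l ⊗[R] U, Function.Surjective p ∧ LinearMap.ker p = c.comap d.subtype

lemma nonempty_tensorFactor_iff {c d : Submodule A M} (h : c ≤ d) :
    Nonempty (TensorFactor R A Λ Δ S (↥d ⧸ c.comap d.subtype)) ↔ FiltStep R A Λ Δ S M c d := by
  constructor
  · rintro ⟨⟨l, hl, U, hU, hU', e⟩⟩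
    exact ⟨h, l, hl, U, hU, hU', e.toLinearMap ∘ₗ Submodule.mkQ _,
      e.surjective.comp (Submodule.mkQ_surjective _), by simp⟩
  · rintro ⟨-, l, hl, U, hU, hU', p, hp, hk⟩
    exact ⟨⟨l, hl, U, hU, hU', (Submodule.quotEquivOfEq _ _ hk.symm).trans
      (p.quotKerEquivOfSurjective hp)⟩⟩

lemma inFilt_iff : InFilt R A Λ Δ S M ↔
    Module.Finite A M ∧ Relation.ReflTransGen (FiltStep R A Λ Δ S M) ⊥ ⊤ := by
  refine and_congr_right fun _ => ⟨?_, fun h => ?_⟩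
  · rintro ⟨n, c, h0, hn, hc, hs⟩
    have : ∀ i : Fin (n + 1), Relation.ReflTransGen (FiltStep R A Λ Δ S M) ⊥ (c i) := by
      intro i
      induction i using Fin.induction with
      | zero => rw [h0]
      | succ i ih =>
        exact ih.tail ((nonempty_tensorFactor_iff (hc i.castSucc_lt_succ.le)).1 (hs i))
    exact hn ▸ this (Fin.last n)
  · suffices ∀ d, Relation.ReflTransGen (FiltStep R A Λ Δ S M) ⊥ d →
        ∃ (n : ℕ) (c : Fin (n + 1) → Submodule A M), c 0 = ⊥ ∧ c (Fin.last n) = d ∧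
          ∀ i : Fin n, FiltStep R A Λ Δ S M (c i.castSucc) (c i.succ) by
      obtain ⟨n, c, h0, hn, hs⟩ := this ⊤ h
      have hc : Monotone c := Fin.monotone_iff_le_succ.2 fun i => (hs i).1
      exact ⟨n, c, h0, hn, hc, fun i => (nonempty_tensorFactor_iff (hs i).1).2 (hs i)⟩
    intro d hd
    induction hd with
    | refl => exact ⟨0, fun _ => ⊥, rfl, rfl, fun i => i.elim0⟩
    | tail _ hs ih =>
      rename_i c' d' _
      obtain ⟨n, c, h0, hn, hc⟩ := ih
      refine ⟨n + 1, Fin.snoc c d', ?_, by simp, fun i => ?_⟩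
      · rw [← h0]
        exact Fin.snoc_castSucc (α := fun _ => Submodule A M) d' c 0
      · induction i using Fin.lastCases with
        | last =>
          rw [Fin.succ_last, Fin.snoc_last, Fin.snoc_castSucc, hn]
          exact hs
        | cast i =>
          rw [Fin.snoc_castSucc, Fin.succ_castSucc, Fin.snoc_castSucc]
          exact hc i

theorem InFilt.induction {motive : ∀ (M : Type) [AddCommGroup M] [Module A M], Prop}
    (zero : ∀ (M : Type) [AddCommGroup M] [Module A M], Subsingleton M → motive M)
    (ext : ∀ (M' M : Type) [AddCommGroup M'] [Module A M'] [AddCommGroup M] [Module A M] (l : Λ)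
      (U : ModuleCat.{0} R) (f : M' →ₗ[A] M) (g : M →ₗ[A] Δ l ⊗[R] U), l ∈ S →
      Module.Finite R U → Module.Projective R U → IsSES f g → motive M' → motive M)
    (h : InFilt R A Λ Δ S M) : motive M := by
  obtain ⟨-, h⟩ := inFilt_iff.1 h
  suffices ∀ d, Relation.ReflTransGen (FiltStep R A Λ Δ S M) ⊥ d →
      ∀ (N : Type) [AddCommGroup N] [Module A N], (N ≃ₗ[A] d) → motive N from
    this ⊤ h M Submodule.topEquiv.symm
  intro d hd
  induction hd with
  | refl => exact fun N _ _ e => zero N e.toEquiv.subsingleton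
  | tail _ hs ih =>
    rename_i c' d' _
    intro N _ _ e
    obtain ⟨hcd, l, hl, U, hU, hU', p, hp, hk⟩ := hs
    refine ext _ N l U (e.symm.toLinearMap ∘ₗ Submodule.inclusion hcd) (p ∘ₗ e.toLinearMap)
      hl hU hU'
      ⟨?_, ?_, ?_⟩ (ih _ (LinearEquiv.refl _ _))
    · exact e.symm.injective.comp (Submodule.inclusion_injective hcd)
    · intro x
      have : p (e x) = 0 ↔ (e x : M) ∈ c' := by
        rw [← LinearMap.mem_ker, hk]; rfl
      simp only [LinearMap.comp_apply, LinearEquiv.coe_coe]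
      rw [this]
      constructor
      · intro hx
        exact ⟨⟨e x, hx⟩, e.symm_apply_eq.2 (Subtype.ext rfl)⟩
      · rintro ⟨y, hy⟩
        rw [LinearMap.comp_apply, LinearEquiv.coe_coe, e.symm_apply_eq] at hy
        rw [← hy]
        exact y.2
    · exact hp.comp e.surjective

lemma FiltStep.map (hf : Function.Injective f) {c d : Submodule A M'}
    (h : FiltStep R A Λ Δ S M' c d) :
    FiltStep R A Λ Δ S M (c.map f) (d.map f) := by
  obtain ⟨hcd, l, hl, U, hU, hU', p, hp, hk⟩ := h
  refine ⟨Submodule.map_mono hcd, l, hl, U, hU, hU',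
    p ∘ₗ (Submodule.equivMapOfInjective f hf d).symm.toLinearMap,
    hp.comp (LinearEquiv.surjective _), ?_⟩
  ext x
  obtain ⟨y, rfl⟩ := (Submodule.equivMapOfInjective f hf d).surjective x
  have : p y = 0 ↔ (y : M') ∈ c := by
    rw [← LinearMap.mem_ker, hk]; rfl
  simp [this, hf.eq_iff]

lemma FiltStep.comap (hg : Function.Surjective g) {c d : Submodule A M''}
    (h : FiltStep R A Λ Δ S M'' c d) :
    FiltStep R A Λ Δ S M (c.comap g) (d.comap g) := by
  obtain ⟨hcd, l, hl, U, hU, hU', p, hp, hk⟩ := h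
  refine ⟨Submodule.comap_mono hcd, l, hl, U, hU, hU',
    p ∘ₗ g.restrict (p := d.comap g) (q := d) (fun x hx => hx), hp.comp ?_, ?_⟩
  · rintro ⟨y, hy⟩
    obtain ⟨x, rfl⟩ := hg y
    exact ⟨⟨x, hy⟩, rfl⟩
  · ext x
    have : ∀ y, p y = 0 ↔ (y : M'') ∈ c := fun y => by
      rw [← LinearMap.mem_ker, hk]; rfl
    simp [this]

lemma InFilt.extension (s : IsSES f g) (h' : InFilt R A Λ Δ S M')
    (h'' : InFilt R A Λ Δ S M'') : InFilt R A Λ Δ S M := by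
  obtain ⟨_, h'⟩ := inFilt_iff.1 h'
  obtain ⟨_, h''⟩ := inFilt_iff.1 h''
  refine inFilt_iff.2 ⟨s.finite_mid, ?_⟩
  have h1 := Relation.ReflTransGen.lift (Submodule.map f) (p := FiltStep R A Λ Δ S M)
    (fun _ _ h => FiltStep.map s.inj h) _ _ h'
  have h2 := Relation.ReflTransGen.lift (Submodule.comap g) (p := FiltStep R A Λ Δ S M)
    (fun _ _ h => FiltStep.comap s.surj h) _ _ h''
  simp only [Function.onFun, Submodule.map_bot, Submodule.map_top, Submodule.comap_bot,
    Submodule.comap_top] at h1 h2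
  rw [LinearMap.exact_iff.1 s.exact] at h2
  exact h1.trans h2

lemma InFilt.of_subsingleton [Subsingleton M] : InFilt R A Λ Δ S M :=
  inFilt_iff.2 ⟨inferInstance, by rw [Subsingleton.elim (⊥ : Submodule A M) ⊤]⟩

lemma InFilt.tensor {l : Λ} (hl : l ∈ S) [Module.Finite A (Δ l)] (U : Type) [AddCommGroup U]
    [Module R U] [Module.Finite R U] [Module.Projective R U] :
    InFilt R A Λ Δ S (Δ l ⊗[R] U) := by
  obtain ⟨n, a, b, hab⟩ := tensor_sum_eq_id (R := R) (A := A) (Δ l) U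
  refine inFilt_iff.2 ⟨Module.Finite.of_sum_eq_id (F := fun _ => Δ l) a b hab,
    .single ⟨bot_le, l, hl, ModuleCat.of R U, ‹_›, ‹_›,
      Submodule.topEquiv.toLinearMap, Submodule.topEquiv.surjective, ?_⟩⟩
  ext x
  simp

lemma InFilt.mono {S' : Set Λ} (hS : S ⊆ S') (h : InFilt R A Λ Δ S M) :
    InFilt R A Λ Δ S' M := by
  obtain ⟨h0, h⟩ := inFilt_iff.1 h
  refine inFilt_iff.2 ⟨h0, Relation.ReflTransGen.mono ?_ _ _ h⟩
  rintro c d ⟨hcd, l, hl, r⟩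
  exact ⟨hcd, l, hS hl, r⟩

end Filtrations

end

noncomputable section

section FiltrationConsequences

set_option linter.unusedSectionVars false

variable {R : Type} [CommRing R] {A : Type} [Ring A] [Algebra R A]
  {Λ : Type} [Fintype Λ] [PartialOrder Λ]
  {Δ : Λ → Type} [∀ l, AddCommGroup (Δ l)] [∀ l, Module R (Δ l)]
  [∀ l, Module A (Δ l)] [∀ l, IsScalarTower R A (Δ l)] {S : Set Λ}
  {M' M M'' N N' : Type} [AddCommGroup M'] [Module A M']
  [AddCommGroup M] [Module A M] [AddCommGroup M''] [Module A M'']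
  [AddCommGroup N] [Module A N] [AddCommGroup N'] [Module A N']
  {f : M' →ₗ[A] M} {g : M →ₗ[A] M''}

lemma comp_univ_sum {ι : Type} [Fintype ι] (u : N →ₗ[A] N') (v : ι → (M →ₗ[A] N)) :
    u ∘ₗ (∑ i, v i) = ∑ i, u ∘ₗ v i := by
  ext m
  simp

lemma univ_sum_comp {ι : Type} [Fintype ι] (v : ι → (N →ₗ[A] N')) (u : M →ₗ[A] N) :
    (∑ i, v i) ∘ₗ u = ∑ i, v i ∘ₗ u := by
  ext m
  simp

lemma IsSES.exists_factor_left (s : IsSES f g) (u : N →ₗ[A] M) (h : g ∘ₗ u = 0) :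
    ∃ v : N →ₗ[A] M', f ∘ₗ v = u := by
  have hu : ∀ x, u x ∈ LinearMap.range f := fun x => (s.exact _).1 (LinearMap.congr_fun h x)
  refine ⟨(LinearEquiv.ofInjective f s.inj).symm.toLinearMap ∘ₗ u.codRestrict _ hu, ?_⟩
  ext x
  exact congrArg Subtype.val ((LinearEquiv.ofInjective f s.inj).apply_symm_apply ⟨u x, hu x⟩)

lemma IsSES.exists_factor_right (s : IsSES f g) (u : M →ₗ[A] N) (h : u ∘ₗ f = 0) :
    ∃ v : M'' →ₗ[A] N, v ∘ₗ g = u := by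
  have hk : LinearMap.ker g ≤ LinearMap.ker u := by
    intro x hx
    obtain ⟨y, rfl⟩ := (s.exact _).1 hx
    exact LinearMap.congr_fun h y
  refine ⟨(LinearMap.ker g).liftQ u hk ∘ₗ (g.quotKerEquivOfSurjective s.surj).symm.toLinearMap, ?_⟩
  ext x
  have : (g.quotKerEquivOfSurjective s.surj).symm (g x) = Submodule.Quotient.mk x := by
    rw [LinearEquiv.symm_apply_eq]; rfl
  simp [this]

/-- To prove a property of all modules filtered by the `Δ(λ) ⊗ U`, it suffices to check it on
the `Δ(λ)`, and to check its stability under direct summands of finite sums and extensions. -/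
theorem InFilt.induction_on {motive : ∀ (M : Type) [AddCommGroup M] [Module A M], Prop}
    (base : ∀ l ∈ S, motive (Δ l))
    (sum : ∀ (n : ℕ) (F : Fin n → Type) [∀ i, AddCommGroup (F i)] [∀ i, Module A (F i)]
      (M : Type) [AddCommGroup M] [Module A M] (a : ∀ i, F i →ₗ[A] M) (b : ∀ i, M →ₗ[A] F i),
      ∑ i, a i ∘ₗ b i = LinearMap.id → (∀ i, motive (F i)) → motive M)
    (ext : ∀ (M' M M'' : Type) [AddCommGroup M'] [Module A M'] [AddCommGroup M] [Module A M]
      [AddCommGroup M''] [Module A M''] (f : M' →ₗ[A] M) (g : M →ₗ[A] M''), IsSES f g →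
      motive M' → motive M'' → motive M)
    (h : InFilt R A Λ Δ S M) : motive M := by
  refine h.induction (motive := fun M _ _ => motive M) (fun M _ _ _ => ?_) ?_
  · exact sum 0 (fun _ => M) M (fun _ => 0) (fun _ => 0) (Subsingleton.elim _ _)
      (fun i => i.elim0)
  · intro M' M _ _ _ _ l U f g hl hU hU' s hM'
    obtain ⟨n, a, b, hab⟩ := tensor_sum_eq_id (R := R) (A := A) (Δ l) U
    exact ext _ _ _ f g s hM' (sum n (fun _ => Δ l) _ a b hab fun _ => base l hl)

lemma InFilt.extZero_left (h : InFilt R A Λ Δ S M) {n : ℕ}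
    (hΔ : ∀ l ∈ S, ExtZero A (Δ l) N n) : ExtZero A M N n := by
  refine h.induction_on (motive := fun M _ _ => ExtZero A M N n) hΔ ?_ ?_
  · exact fun n F _ _ M _ _ a b hab hF => ExtZero.of_sum_left a b hab hF
  · exact fun M' M M'' _ _ _ _ _ _ f g s h' h'' => s.extZero_mid h' h''

lemma InFilt.extZero_right (h : InFilt R A Λ Δ S M) {n : ℕ}
    (hΔ : ∀ l ∈ S, ExtZero A N (Δ l) n) : ExtZero A N M n := by
  refine h.induction_on (motive := fun M _ _ => ExtZero A N M n) hΔ ?_ ?_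
  · exact fun n F _ _ M _ _ a b hab hF => ExtZero.of_sum_right a b hab hF
  · exact fun M' M M'' _ _ _ _ _ _ f g s h' h'' => s.extZero_mid' h' h''

lemma InFilt.hom_eq_zero (h : InFilt R A Λ Δ S M)
    (hΔ : ∀ l ∈ S, ∀ u : Δ l →ₗ[A] N, u = 0) (u : M →ₗ[A] N) : u = 0 := by
  revert u
  refine h.induction_on (motive := fun M _ _ => ∀ u : M →ₗ[A] N, u = 0) hΔ ?_ ?_
  · intro n F _ _ M _ _ a b hab hF u
    rw [← LinearMap.comp_id u, ← hab, comp_univ_sum]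
    exact Finset.sum_eq_zero fun i _ => by
      rw [← LinearMap.comp_assoc, hF i (u ∘ₗ a i), LinearMap.zero_comp]
  · intro M' M M'' _ _ _ _ _ _ f g s h' h'' u
    obtain ⟨v, rfl⟩ := s.exists_factor_right u (h' _)
    rw [h'' v, LinearMap.zero_comp]

lemma InFilt.exists_lift (h : InFilt R A Λ Δ S M) (p : N →ₗ[A] N')
    (hΔ : ∀ l ∈ S, ExtZero A (Δ l) N 1)
    (hp : ∀ l ∈ S, ∀ u : Δ l →ₗ[A] N', ∃ v : Δ l →ₗ[A] N, p ∘ₗ v = u) (u : M →ₗ[A] N') :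
    ∃ v : M →ₗ[A] N, p ∘ₗ v = u := by
  suffices ExtZero A M N 1 ∧ ∀ u : M →ₗ[A] N', ∃ v : M →ₗ[A] N, p ∘ₗ v = u from this.2 u
  clear u
  refine h.induction_on (motive := fun M _ _ => ExtZero A M N 1 ∧
    ∀ u : M →ₗ[A] N', ∃ v : M →ₗ[A] N, p ∘ₗ v = u) (fun l hl => ⟨hΔ l hl, hp l hl⟩) ?_ ?_
  · intro n F _ _ M _ _ a b hab hF
    refine ⟨ExtZero.of_sum_left a b hab fun i => (hF i).1, fun u => ?_⟩
    choose v hv using fun i => (hF i).2 (u ∘ₗ a i)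
    refine ⟨∑ i, v i ∘ₗ b i, ?_⟩
    rw [comp_univ_sum, ← LinearMap.comp_id u, ← hab, comp_univ_sum]
    exact Finset.sum_congr rfl fun i _ => by rw [← LinearMap.comp_assoc, hv, LinearMap.comp_assoc]
  · intro M' M M'' _ _ _ _ _ _ f g s h' h''
    refine ⟨s.extZero_mid h'.1 h''.1, fun u => ?_⟩
    obtain ⟨v, hv⟩ := h'.2 (u ∘ₗ f)
    obtain ⟨w, rfl⟩ := s.exists_extend h''.1 v
    obtain ⟨t, ht⟩ := s.exists_factor_right (u - p ∘ₗ w) (by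
      rw [LinearMap.sub_comp, ← hv, LinearMap.comp_assoc, sub_self])
    obtain ⟨t, rfl⟩ := h''.2 t
    exact ⟨w + t ∘ₗ g, by rw [LinearMap.comp_add, ← LinearMap.comp_assoc, ht]; abel⟩

lemma InFilt.exists_extend (h : InFilt R A Λ Δ S M) (j : N →ₗ[A] N')
    (hΔ : ∀ l ∈ S, ExtZero A N' (Δ l) 1)
    (hj : ∀ l ∈ S, ∀ u : N →ₗ[A] Δ l, ∃ v : N' →ₗ[A] Δ l, v ∘ₗ j = u) (u : N →ₗ[A] M) :
    ∃ v : N' →ₗ[A] M, v ∘ₗ j = u := by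
  suffices ExtZero A N' M 1 ∧ ∀ u : N →ₗ[A] M, ∃ v : N' →ₗ[A] M, v ∘ₗ j = u from this.2 u
  clear u
  refine h.induction_on (motive := fun M _ _ => ExtZero A N' M 1 ∧
    ∀ u : N →ₗ[A] M, ∃ v : N' →ₗ[A] M, v ∘ₗ j = u) (fun l hl => ⟨hΔ l hl, hj l hl⟩) ?_ ?_
  · intro n F _ _ M _ _ a b hab hF
    refine ⟨ExtZero.of_sum_right a b hab fun i => (hF i).1, fun u => ?_⟩
    choose v hv using fun i => (hF i).2 (b i ∘ₗ u)
    refine ⟨∑ i, a i ∘ₗ v i, ?_⟩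
    rw [univ_sum_comp, ← LinearMap.id_comp u, ← hab, univ_sum_comp]
    exact Finset.sum_congr rfl fun i _ => by rw [LinearMap.comp_assoc, hv, LinearMap.comp_assoc]
  · intro M' M M'' _ _ _ _ _ _ f g s h' h''
    refine ⟨s.extZero_mid' h'.1 h''.1, fun u => ?_⟩
    obtain ⟨v, hv⟩ := h''.2 (g ∘ₗ u)
    obtain ⟨w, rfl⟩ := s.exists_lift h'.1 v
    obtain ⟨t, ht⟩ := s.exists_factor_left (u - w ∘ₗ j) (by
      rw [LinearMap.comp_sub, ← hv, LinearMap.comp_assoc, sub_self])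
    obtain ⟨t, rfl⟩ := h'.2 t
    exact ⟨w + f ∘ₗ t, by rw [LinearMap.add_comp, LinearMap.comp_assoc, ht]; abel⟩

/-- The `R`-module structure on an `A`-module. -/
abbrev moduleOfAlgebra (R : Type) [CommRing R] (A : Type) [Ring A] [Algebra R A] (M : Type)
    [AddCommGroup M] [Module A M] : Module R M := Module.compHom M (algebraMap R A)

lemma isScalarTower_moduleOfAlgebra (M : Type) [AddCommGroup M] [Module A M] :
    let := moduleOfAlgebra R A M
    IsScalarTower R A M := by
  let := moduleOfAlgebra R A M
  refine ⟨fun r a m => ?_⟩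
  rw [Algebra.smul_def, mul_smul]
  rfl

variable (R A) in
/-- The `A`-module `M` is finitely generated projective as an `R`-module. -/
def FinProj (M : Type) [AddCommGroup M] [Module A M] : Prop :=
  let := moduleOfAlgebra R A M
  Module.Finite R M ∧ Module.Projective R M

lemma finProj_iff [Module R M] [IsScalarTower R A M] :
    FinProj R A M ↔ Module.Finite R M ∧ Module.Projective R M := by
  have : ‹Module R M› = moduleOfAlgebra R A M := by
    ext r m
    exact (algebraMap_smul A r m).symm
  subst this
  rfl

lemma FinProj.of_sum_eq_id {ι : Type} [Fintype ι] {F : ι → Type} [∀ i, AddCommGroup (F i)]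
    [∀ i, Module A (F i)] (a : ∀ i, F i →ₗ[A] M) (b : ∀ i, M →ₗ[A] F i)
    (hab : ∑ i, a i ∘ₗ b i = LinearMap.id) (hF : ∀ i, FinProj R A (F i)) : FinProj R A M := by
  let := moduleOfAlgebra R A M
  let := fun i => moduleOfAlgebra R A (F i)
  have := isScalarTower_moduleOfAlgebra (R := R) (A := A) M
  have := fun i => isScalarTower_moduleOfAlgebra (R := R) (A := A) (F i)
  have hab' : ∑ i, (a i).restrictScalars R ∘ₗ (b i).restrictScalars R = LinearMap.id := by
    ext m
    simpa using LinearMap.congr_fun hab m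
  have := fun i => (hF i).1
  have := fun i => (hF i).2
  exact ⟨Module.Finite.of_sum_eq_id _ _ hab', Module.Projective.of_sum_eq_id _ _ hab'⟩

lemma InFilt.finProj (h : InFilt R A Λ Δ S M) (hΔ : ∀ l ∈ S, FinProj R A (Δ l)) :
    FinProj R A M := by
  refine h.induction_on (motive := fun M _ _ => FinProj R A M) hΔ ?_ ?_
  · exact fun n F _ _ M _ _ a b hab hF => FinProj.of_sum_eq_id a b hab hF
  · intro M' M M'' _ _ _ _ _ _ f g s h' h''
    let := moduleOfAlgebra R A M
    let := moduleOfAlgebra R A M'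
    let := moduleOfAlgebra R A M''
    have := isScalarTower_moduleOfAlgebra (R := R) (A := A) M
    have := isScalarTower_moduleOfAlgebra (R := R) (A := A) M'
    have := isScalarTower_moduleOfAlgebra (R := R) (A := A) M''
    have s' : IsSES (f.restrictScalars R) (g.restrictScalars R) := ⟨s.inj, s.exact, s.surj⟩
    obtain ⟨_, _⟩ := h'
    obtain ⟨_, _⟩ := h''
    exact ⟨s'.finite_mid, s'.projective_mid⟩

section HomModule

variable [Module R N] [IsScalarTower R A N]

variable (R N) in
/-- Precomposition as an `R`-linear map. -/
def precomp (u : M' →ₗ[A] M) : (M →ₗ[A] N) →ₗ[R] (M' →ₗ[A] N) where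
  toFun v := v ∘ₗ u
  map_add' _ _ := LinearMap.add_comp _ _ _
  map_smul' _ _ := LinearMap.smul_comp _ _ _

@[simp] lemma precomp_apply (u : M' →ₗ[A] M) (v : M →ₗ[A] N) : precomp R N u v = v ∘ₗ u := rfl

variable (R M) in
/-- Postcomposition as an `R`-linear map. -/
def postcomp [Module R N'] [IsScalarTower R A N'] (u : N →ₗ[A] N') :
    (M →ₗ[A] N) →ₗ[R] (M →ₗ[A] N') where
  toFun v := u ∘ₗ v
  map_add' _ _ := LinearMap.comp_add _ _ _
  map_smul' r v := by
    ext m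
    exact (u.restrictScalars R).map_smul r (v m)

@[simp] lemma postcomp_apply [Module R N'] [IsScalarTower R A N'] (u : N →ₗ[A] N')
    (v : M →ₗ[A] N) : postcomp R M u v = u ∘ₗ v := rfl

lemma finProj_hom_of_sum {ι : Type} [Fintype ι] {F : ι → Type} [∀ i, AddCommGroup (F i)]
    [∀ i, Module A (F i)] (a : ∀ i, F i →ₗ[A] M) (b : ∀ i, M →ₗ[A] F i)
    (hab : ∑ i, a i ∘ₗ b i = LinearMap.id)
    (hF : ∀ i, Module.Finite R (F i →ₗ[A] N) ∧ Module.Projective R (F i →ₗ[A] N)) :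
    Module.Finite R (M →ₗ[A] N) ∧ Module.Projective R (M →ₗ[A] N) := by
  have hab' : ∑ i, precomp R N (b i) ∘ₗ precomp R N (a i) = LinearMap.id := by
    ext u m
    simpa using congrArg u (LinearMap.congr_fun hab m)
  have := fun i => (hF i).1
  have := fun i => (hF i).2
  exact ⟨Module.Finite.of_sum_eq_id _ _ hab', Module.Projective.of_sum_eq_id _ _ hab'⟩

lemma InFilt.finProj_hom (h : InFilt R A Λ Δ S M)
    (hΔ : ∀ l ∈ S, ExtZero A (Δ l) N 1)
    (hH : ∀ l ∈ S, Module.Finite R (Δ l →ₗ[A] N) ∧ Module.Projective R (Δ l →ₗ[A] N)) :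
    Module.Finite R (M →ₗ[A] N) ∧ Module.Projective R (M →ₗ[A] N) := by
  refine And.right (a := ExtZero A M N 1) (h.induction_on (motive := fun M _ _ => ExtZero A M N 1 ∧
    Module.Finite R (M →ₗ[A] N) ∧ Module.Projective R (M →ₗ[A] N))
    (fun l hl => ⟨hΔ l hl, hH l hl⟩) ?_ ?_)
  · exact fun n F _ _ M _ _ a b hab hF => ⟨ExtZero.of_sum_left a b hab fun i => (hF i).1,
      finProj_hom_of_sum a b hab fun i => (hF i).2⟩
  · intro M' M M'' _ _ _ _ _ _ f g s ⟨h', _, _⟩ ⟨h'', _, _⟩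
    have s' : IsSES (precomp R N g) (precomp R N f) := by
      refine ⟨fun u v huv => ?_, fun u => ⟨s.exists_factor_right u, ?_⟩, s.exists_extend h''⟩
      · exact (LinearMap.cancel_right s.surj).1 huv
      · rintro ⟨v, rfl⟩
        ext m
        simp [s.exact.apply_apply_eq_zero]
    exact ⟨s.extZero_mid h' h'', s'.finite_mid, s'.projective_mid⟩

/-- `Hom_A(P, N)` is finitely generated projective over `R` if `N` is and `P` is finitely
generated projective over `A`. -/
lemma finProj_hom_of_projective [Module.Finite A M] [Module.Projective A M] [Module.Finite R N]
    [Module.Projective R N] :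
    Module.Finite R (M →ₗ[A] N) ∧ Module.Projective R (M →ₗ[A] N) := by
  obtain ⟨n, p, q, h⟩ := Module.Projective.exists_dual_basis (R := A) M
  let e : N ≃ₗ[R] (A →ₗ[A] N) :=
    { toFun := fun x => LinearMap.toSpanSingleton A N x
      invFun := fun u => u 1
      map_add' := fun x y => by ext; simp
      map_smul' := fun r x => by ext; simp
      left_inv := fun x => by simp
      right_inv := fun u => by ext; simp }
  refine finProj_hom_of_sum (F := fun _ => A) (fun i => LinearMap.toSpanSingleton A M (p i)) q ?_
    fun _ => ⟨.equiv e, .of_equiv e⟩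
  ext m
  simpa using h m

lemma finProj_of_hom (h : Module.Finite R (A →ₗ[A] N) ∧ Module.Projective R (A →ₗ[A] N)) :
    FinProj R A N := by
  let e : (A →ₗ[A] N) ≃ₗ[R] N :=
    { toFun := fun u => u 1
      invFun := fun x => LinearMap.toSpanSingleton A N x
      map_add' := fun x y => rfl
      map_smul' := fun r x => rfl
      left_inv := fun u => by ext; simp
      right_inv := fun x => by simp }
  obtain ⟨_, _⟩ := h
  exact finProj_iff.2 ⟨.equiv e, .of_equiv e⟩

end HomModule

end FiltrationConsequences

end

noncomputable section

section Hat

variable {R : Type} [CommRing R] {A : Type} [Ring A] [Algebra R A]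
  {P M M' : Type} [AddCommGroup P] [Module A P] [AddCommGroup M] [Module R M] [Module A M]
  [IsScalarTower R A M] [AddCommGroup M'] [Module R M'] [Module A M'] [IsScalarTower R A M']

variable (R A P) in
/-- The module `Hom_R(Hom_A(P, A), R)`, which represents `M ↦ Hom_R(Hom_A(P, M), R)` if `P` is
finitely generated projective. -/
abbrev Nakayama : Type := (P →ₗ[A] A) →ₗ[R] R

/-- The homomorphism `M → Hom_R(Hom_A(P, A), R)` attached to a linear form on `Hom_A(P, M)`. -/
def hat (η : (P →ₗ[A] M) →ₗ[R] R) : M →ₗ[A] Nakayama R A P where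
  toFun m := η ∘ₗ postcomp R P (LinearMap.toSpanSingleton A M m)
  map_add' m m' := by
    ext g
    simp only [LinearMap.comp_apply, postcomp_apply, LinearMap.add_apply, ← map_add]
    congr 1
    ext x
    simp
  map_smul' a m := by
    ext g
    simp only [LinearMap.comp_apply, postcomp_apply, RingHom.id_apply, dualModule'_smul_apply]
    congr 1
    ext x
    simp [mul_smul]

lemma hat_apply (η : (P →ₗ[A] M) →ₗ[R] R) (m : M) (g : P →ₗ[A] A) :
    hat η m g = η (LinearMap.toSpanSingleton A M m ∘ₗ g) := rfl

lemma hat_comp (η : (P →ₗ[A] M) →ₗ[R] R) (k : M' →ₗ[A] M) :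
    hat η ∘ₗ k = hat (η ∘ₗ postcomp R P k) := by
  ext m g
  simp only [LinearMap.comp_apply, hat_apply, postcomp_apply]
  congr 1
  ext x
  simp

variable [Module.Finite A P] [Module.Projective A P]

lemma hat_injective : Function.Injective (hat (R := R) (A := A) (P := P) (M := M)) := by
  intro η η' h
  obtain ⟨n, p, q, hpq⟩ := Module.Projective.exists_dual_basis (R := A) P
  have key : ∀ θ : (P →ₗ[A] M) →ₗ[R] R, ∀ g, θ g = ∑ i, hat θ (g (p i)) (q i) := by
    intro θ g
    simp only [hat_apply, ← map_sum]
    congr 1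
    ext x
    conv_lhs => rw [← hpq x, map_sum]
    simp
  ext g
  rw [key, key, h]

lemma exists_hat_eq (f : M →ₗ[A] Nakayama R A P) : ∃ η : (P →ₗ[A] M) →ₗ[R] R, hat η = f := by
  obtain ⟨n, p, q, hpq⟩ := Module.Projective.exists_dual_basis (R := A) P
  refine ⟨{ toFun := fun g => ∑ i, f (g (p i)) (q i), map_add' := ?_, map_smul' := ?_ }, ?_⟩
  · intro g g'
    simp [Finset.sum_add_distrib]
  · intro r g
    have : ∀ m : M, f (r • m) = r • f m := (f.restrictScalars R).map_smul r
    simp [this, Finset.mul_sum]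
  · ext m g
    rw [hat_apply]
    simp only [LinearMap.coe_mk, AddHom.coe_mk, LinearMap.comp_apply,
      LinearMap.toSpanSingleton_apply, map_smul, dualModule'_smul_apply]
    rw [← map_sum]
    congr 1
    ext x
    conv_rhs => rw [← hpq x, map_sum]
    simp

end Hat

section QuasiHereditary

set_option linter.unusedSectionVars false

variable {R : Type} [CommRing R] {A : Type} [Ring A] [Algebra R A]
  {Λ : Type} [Fintype Λ] [PartialOrder Λ]
  {Δ : Λ → Type} [∀ l, AddCommGroup (Δ l)] [∀ l, Module R (Δ l)]
  [∀ l, Module A (Δ l)] [∀ l, IsScalarTower R A (Δ l)]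
  {Nb : Λ → Type} [∀ l, AddCommGroup (Nb l)] [∀ l, Module R (Nb l)]
  [∀ l, Module A (Nb l)] [∀ l, IsScalarTower R A (Nb l)]
  {M N N' : Type} [AddCommGroup M] [Module A M]
  [AddCommGroup N] [Module A N] [AddCommGroup N'] [Module A N']

lemma InFilt.of_mem {S : Set Λ} {l : Λ} (hl : l ∈ S) [Module.Finite A (Δ l)] :
    InFilt R A Λ Δ S (Δ l) := by
  let e := TensorProduct.AlgebraTensorModule.rid R A (Δ l)
  refine inFilt_iff.2 ⟨‹_›, .single ⟨bot_le, l, hl, ModuleCat.of R R, inferInstanceAs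
    (Module.Finite R R), inferInstanceAs (Module.Projective R R),
    e.symm.toLinearMap ∘ₗ Submodule.topEquiv.toLinearMap,
    e.symm.surjective.comp Submodule.topEquiv.surjective, ?_⟩⟩
  ext x
  simp

/-- A module in `add (⊕ F(λ))` is a direct summand of a finite sum of copies of the `F(λ)`. -/
lemma exists_sum_eq_id_of_inAdd {F : Λ → Type} [∀ l, AddCommGroup (F l)] [∀ l, Module A (F l)]
    (h : InAdd A (∀ l, F l) M) : ∃ (n : ℕ) (a : ∀ k : Fin n × Λ, F k.2 →ₗ[A] M)
      (b : ∀ k : Fin n × Λ, M →ₗ[A] F k.2), ∑ k, a k ∘ₗ b k = LinearMap.id := by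
  classical
  obtain ⟨n, i, p, hp⟩ := h
  refine ⟨n, fun k => p ∘ₗ LinearMap.single A (fun _ : Fin n => ∀ l, F l) k.1 ∘ₗ
    LinearMap.single A F k.2, fun k => LinearMap.proj k.2 ∘ₗ LinearMap.proj k.1 ∘ₗ i, ?_⟩
  rw [← hp]
  ext m
  simp only [LinearMap.sum_apply, LinearMap.comp_apply, ← map_sum, LinearMap.proj_apply]
  congr 1
  have hsum : ∀ x : Fin n → ∀ l, F l, ∑ k, Pi.single k (∑ l, Pi.single l (x k l)) = x := by
    intro x
    simp_rw [Finset.univ_sum_single]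
  rw [Fintype.sum_prod_type]
  simp only [← map_sum]
  exact hsum (i m)

namespace SplitQH

variable (h : SplitQH R A Λ Δ)
include h

lemma inFilt_P (l : Λ) : InFilt R A Λ Δ {m | l ≤ m} (h.P l) := by
  have := h.deltaFinA l
  exact InFilt.extension (IsSES.ker_subtype (h.epi_surj l))
    ((h.ker_filt l).mono fun m hm => le_of_lt hm) (InFilt.of_mem (le_refl l))

lemma hom_P_eq_zero (l : Λ) (hN : ∀ m, l ≤ m → ∀ u : Δ m →ₗ[A] N, u = 0)
    (u : h.P l →ₗ[A] N) : u = 0 :=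
  (h.inFilt_P l).hom_eq_zero hN u

lemma exists_sum_eq_id : ∃ (n : ℕ) (a : ∀ k : Fin n × Λ, h.P k.2 →ₗ[A] A)
    (b : ∀ k : Fin n × Λ, A →ₗ[A] h.P k.2), ∑ k, a k ∘ₗ b k = LinearMap.id :=
  exists_sum_eq_id_of_inAdd (h.add_gen (ModuleCat.of A A) (inferInstanceAs (Module.Finite A A))
    (inferInstanceAs (Module.Projective A A)))

lemma subsingleton_of_hom_eq_zero (hN : ∀ l, ∀ u : Δ l →ₗ[A] N, u = 0) : Subsingleton N := by
  obtain ⟨n, a, b, hab⟩ := h.exists_sum_eq_id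
  refine subsingleton_of_forall_eq 0 fun x => ?_
  have : LinearMap.toSpanSingleton A N x = 0 := by
    rw [← LinearMap.comp_id (LinearMap.toSpanSingleton A N x), ← hab, comp_univ_sum]
    refine Finset.sum_eq_zero fun k _ => ?_
    rw [← LinearMap.comp_assoc, h.hom_P_eq_zero k.2 (fun m _ => hN m)
      (LinearMap.toSpanSingleton A N x ∘ₗ a k), LinearMap.zero_comp]
  simpa using LinearMap.congr_fun this 1

lemma surjective_of_lift (p : N →ₗ[A] N') (hN : ∀ l, ExtZero A (Δ l) N 1)
    (hp : ∀ l, ∀ u : Δ l →ₗ[A] N', ∃ v : Δ l →ₗ[A] N, p ∘ₗ v = u) : Function.Surjective p := by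
  obtain ⟨n, a, b, hab⟩ := h.exists_sum_eq_id
  intro x
  choose v hv using fun k => (h.inFilt_P k.2).exists_lift p (fun l _ => hN l) (fun l _ => hp l)
    (LinearMap.toSpanSingleton A N' x ∘ₗ a k)
  refine ⟨∑ k, v k (b k 1), ?_⟩
  calc p (∑ k, v k (b k 1)) = LinearMap.toSpanSingleton A N' x ((∑ k, a k ∘ₗ b k) 1) := by
        rw [map_sum, LinearMap.sum_apply, map_sum]
        exact Finset.sum_congr rfl fun k _ => LinearMap.congr_fun (hv k) (b k 1)
    _ = x := by rw [hab]; simp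

/-- Homomorphisms from the projective cover of `Δ(λ)` into a module without homomorphisms from
larger standard modules factor uniquely through `Δ(λ)`. -/
lemma precomp_epi_bijective [Module R N] [IsScalarTower R A N] (l : Λ)
    (hN : ∀ m, l < m → ∀ u : Δ m →ₗ[A] N, u = 0) :
    Function.Bijective (precomp R N (h.epi l)) := by
  refine ⟨fun u v huv => (LinearMap.cancel_right (h.epi_surj l)).1 huv, fun u => ?_⟩
  exact (IsSES.ker_subtype (h.epi_surj l)).exists_factor_right u
    ((h.ker_filt l).hom_eq_zero hN _)

lemma exists_smul_of_end (l : Λ) (u : Δ l →ₗ[A] Δ l) : ∃ r : R, u = r • LinearMap.id := by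
  obtain ⟨e⟩ := h.endIso l
  refine ⟨e u, e.injective ?_⟩
  have : (e u • LinearMap.id : Δ l →ₗ[A] Δ l) = algebraMap R (Module.End A (Δ l)) (e u) := rfl
  rw [this, AlgEquiv.commutes]
  rfl

end SplitQH

section Costandard

lemma IsCostandard.extZero (hc : IsCostandard R A Λ Δ Nb) (l m : Λ) (i : ℕ) :
    ExtZero A (Δ l) (Nb m) (i + 1) :=
  (extVanish_iff_extZero (i + 1) i.succ_pos).1 (hc.2.2.2 l m (i + 1) i.succ_pos)

variable (h : SplitQH R A Λ Δ) (hc : IsCostandard R A Λ Δ Nb)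
include h hc

lemma IsCostandard.finProj_hom (l m : Λ) :
    Module.Finite R (Δ l →ₗ[A] Nb m) ∧ Module.Projective R (Δ l →ₗ[A] Nb m) := by
  by_cases hlm : l = m
  · subst hlm
    obtain ⟨e⟩ := hc.2.1 l
    exact ⟨.equiv e.symm, .of_equiv e.symm⟩
  · have : Subsingleton (Δ l →ₗ[A] Nb m) := subsingleton_of_forall_eq 0 (hc.2.2.1 l m hlm)
    exact ⟨inferInstance, inferInstance⟩

lemma IsCostandard.finProj (l : Λ) : FinProj R A (Nb l) := by
  obtain ⟨n, a, b, hab⟩ := h.exists_sum_eq_id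
  refine finProj_of_hom (finProj_hom_of_sum a b hab fun k => ?_)
  exact (h.inFilt_P k.2).finProj_hom (fun m _ => hc.extZero m l 0)
    (fun m _ => hc.finProj_hom h m l)

/-- The linear form on `Hom_A(P(λ), ∇(λ))` induced by `Hom_A(Δ(λ), ∇(λ)) ≃ R`. -/
lemma IsCostandard.exists_form (l : Λ) (e : (Δ l →ₗ[A] Nb l) ≃ₗ[R] R) :
    ∃ η : (h.P l →ₗ[A] Nb l) →ₗ[R] R, Function.Injective η ∧ ∀ w, η (w ∘ₗ h.epi l) = e w := by
  let E := LinearEquiv.ofBijective _ (h.precomp_epi_bijective (R := R) (N := Nb l) l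
    fun m hm => hc.2.2.1 m l hm.ne')
  refine ⟨e.toLinearMap ∘ₗ E.symm.toLinearMap, e.injective.comp E.symm.injective, fun w => ?_⟩
  exact congrArg e (E.symm_apply_apply w)

/-- If no `Δ(μ)` with `μ > λ` maps nontrivially to `M`, then every linear form on
`Hom_A(Δ(λ), M)` is induced by a homomorphism `M → ∇(λ)`. -/
theorem IsCostandard.exists_hom [Module R M] [IsScalarTower R A M] (l : Λ)
    (e : (Δ l →ₗ[A] Nb l) ≃ₗ[R] R) (hM : ∀ m, l < m → ∀ u : Δ m →ₗ[A] M, u = 0)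
    (ξ : (Δ l →ₗ[A] M) →ₗ[R] R) : ∃ k : M →ₗ[A] Nb l, ∀ g, e (k ∘ₗ g) = ξ g := by
  have := h.P_fin l
  have := h.P_proj l
  obtain ⟨η₀, hη₀, hη₀e⟩ := hc.exists_form h l e
  have hφ : Function.Injective (hat η₀) := by
    have := h.subsingleton_of_hom_eq_zero (N := LinearMap.ker (hat η₀)) fun m u => by
      have h0 : hat η₀ ∘ₗ (LinearMap.ker (hat η₀)).subtype ∘ₗ u = 0 := by
        ext1 x
        exact (u x).2
      suffices (LinearMap.ker (hat η₀)).subtype ∘ₗ u = 0 by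
        ext x
        exact LinearMap.congr_fun this x
      by_cases hm : m = l
      · subst hm
        have h1 : η₀ ∘ₗ postcomp R (h.P m) ((LinearMap.ker (hat η₀)).subtype ∘ₗ u) = 0 :=
          hat_injective (by rw [← hat_comp, h0]; ext; simp [hat_apply])
        have h2 := LinearMap.congr_fun h1 (h.epi m)
        rw [LinearMap.comp_apply, postcomp_apply, hη₀e] at h2
        exact e.injective (h2.trans e.map_zero.symm)
      · exact hc.2.2.1 m l hm _
    rw [← LinearMap.ker_eq_bot, ← Submodule.subsingleton_iff_eq_bot]
    exact this
  have hfac : ∀ m, ¬ l < m → ∀ u : Δ m →ₗ[A] Nakayama R A (h.P l), ∃ w, hat η₀ ∘ₗ w = u := by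
    intro m hm u
    obtain ⟨ξ, rfl⟩ := exists_hat_eq u
    by_cases hml : m = l
    · subst hml
      refine ⟨e.symm (ξ (h.epi m)), ?_⟩
      rw [hat_comp]
      congr 1
      ext g
      obtain ⟨g, rfl⟩ := (h.precomp_epi_bijective (R := R) (N := Δ m) m fun m' hm' u => by
        by_contra hu
        exact (h.hom_le _ _ ⟨u, hu⟩).not_gt hm').2 g
      obtain ⟨r, rfl⟩ := h.exists_smul_of_end m g
      have : precomp R (Δ m) (h.epi m) (r • LinearMap.id) = r • h.epi m := by
        ext; simp
      rw [this, map_smul, map_smul, LinearMap.comp_apply, postcomp_apply, hη₀e,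
        LinearEquiv.apply_symm_apply]
    · refine ⟨0, ?_⟩
      have : ξ = 0 := by
        ext g
        rw [h.hom_P_eq_zero l (fun m' hm' u => by
          by_contra hu
          exact hm (lt_of_le_of_ne (hm'.trans (h.hom_le _ _ ⟨u, hu⟩)) (Ne.symm hml))) g]
        simp
      ext
      simp [this, hat_apply]
  let E := LinearEquiv.ofBijective _ (h.precomp_epi_bijective (R := R) (N := M) l hM)
  let f : M →ₗ[A] Nakayama R A (h.P l) := hat (ξ ∘ₗ E.symm.toLinearMap)
  have s := IsSES.range_mkQ hφ
  let q := (LinearMap.range (hat η₀)).mkQ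
  have hX := h.subsingleton_of_hom_eq_zero (N := LinearMap.range (q ∘ₗ f)) fun m u => by
    by_cases hm : l < m
    · have := h.P_proj m
      obtain ⟨v, hv⟩ := Module.projective_lifting_property (q ∘ₗ f).rangeRestrict (u ∘ₗ h.epi m)
        (LinearMap.surjective_rangeRestrict _)
      rw [h.hom_P_eq_zero m (fun m' hm' => hM m' (hm.trans_le hm')) v, LinearMap.comp_zero] at hv
      exact (LinearMap.cancel_right (h.epi_surj m)).1 (hv.symm.trans (LinearMap.zero_comp _).symm)
    · obtain ⟨t, ht⟩ := s.exists_lift (hc.extZero m l 0)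
        ((LinearMap.range (q ∘ₗ f)).subtype ∘ₗ u)
      obtain ⟨w, rfl⟩ := hfac m hm t
      ext x
      have h1 := LinearMap.congr_fun ht x
      exact h1.symm.trans (s.exact.apply_apply_eq_zero (w x))
  obtain ⟨k, hk⟩ := s.exists_factor_left f (by
    ext x
    exact congrArg Subtype.val (Subsingleton.elim (⟨q (f x), x, rfl⟩ : LinearMap.range (q ∘ₗ f)) 0))
  refine ⟨k, fun g => ?_⟩
  rw [hat_comp] at hk
  have h1 := LinearMap.congr_fun (hat_injective hk) (g ∘ₗ h.epi l)
  rw [LinearMap.comp_apply, postcomp_apply, ← LinearMap.comp_assoc, hη₀e] at h1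
  rw [h1]
  exact congrArg ξ (E.symm_apply_apply g)

end Costandard

end QuasiHereditary

end

noncomputable section

section Recognition

set_option linter.unusedSectionVars false

variable {R : Type} [CommRing R] {A : Type} [Ring A] [Algebra R A]
  {Λ : Type} [Fintype Λ] [PartialOrder Λ]
  {Δ : Λ → Type} [∀ l, AddCommGroup (Δ l)] [∀ l, Module R (Δ l)]
  [∀ l, Module A (Δ l)] [∀ l, IsScalarTower R A (Δ l)]
  {Nb : Λ → Type} [∀ l, AddCommGroup (Nb l)] [∀ l, Module R (Nb l)]
  [∀ l, Module A (Nb l)] [∀ l, IsScalarTower R A (Nb l)]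

/-- Induction over the lower sets of a finite poset, removing a maximal element in each step. -/
lemma lowerSet_induction {p : Set Λ → Prop} (empty : p ∅)
    (step : ∀ (B : Set Λ) (l : Λ), IsLowerSet B → l ∈ B → (∀ m, l < m → m ∉ B) →
      p (B \ {l}) → p B) : p Set.univ := by
  suffices ∀ (n : ℕ) (B : Set Λ), B.ncard = n → IsLowerSet B → p B from
    this _ Set.univ rfl isLowerSet_univ
  intro n
  induction n with
  | zero =>
    intro B hB _
    rw [(Set.ncard_eq_zero B.toFinite).1 hB]
    exact empty
  | succ n ih =>
    intro B hB hlow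
    have hne : B.Nonempty := by
      rw [← Set.ncard_pos B.toFinite]
      omega
    obtain ⟨l, hl⟩ := B.toFinite.exists_maximal hne
    have hmax : ∀ m, l < m → m ∉ B := fun m hm hmB => hm.not_ge (hl.2 hmB hm.le)
    refine step B l hlow hl.1 hmax (ih _ ?_ ?_)
    · rw [Set.ncard_sdiff_singleton_of_mem hl.1, hB]
      rfl
    · rintro x y hyx ⟨hx, hxl⟩
      refine ⟨hlow hyx hx, fun hy => ?_⟩
      rw [Set.mem_singleton_iff] at hy
      subst hy
      exact hmax x (lt_of_le_of_ne hyx (Ne.symm hxl)) hx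

/-- If no `Δ(μ)` with `μ > λ` maps nontrivially to `N`, then `Hom_A(Δ(λ), N)` is finitely
generated projective. -/
lemma SplitQH.finProj_hom (h : SplitQH R A Λ Δ) {N : Type} [AddCommGroup N] [Module R N]
    [Module A N] [IsScalarTower R A N] [Module.Finite R N] [Module.Projective R N] (l : Λ)
    (hN : ∀ m, l < m → ∀ u : Δ m →ₗ[A] N, u = 0) :
    Module.Finite R (Δ l →ₗ[A] N) ∧ Module.Projective R (Δ l →ₗ[A] N) := by
  have := h.P_fin l
  have := h.P_proj l
  obtain ⟨_, _⟩ := finProj_hom_of_projective (R := R) (A := A) (M := h.P l) (N := N)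
  let E := LinearEquiv.ofBijective _ (h.precomp_epi_bijective (R := R) (N := N) l hN)
  exact ⟨.equiv E.symm, .of_equiv E.symm⟩

lemma hom_tensor_eq_zero {X Y U : Type} [AddCommGroup X] [Module R X] [Module A X]
    [IsScalarTower R A X] [AddCommGroup Y] [Module A Y] [AddCommGroup U] [Module R U]
    [Module.Finite R U] [Module.Projective R U]
    (hX : ∀ u : Y →ₗ[A] X, u = 0) (u : Y →ₗ[A] X ⊗[R] U) : u = 0 := by
  obtain ⟨n, a, b, hab⟩ := tensor_sum_eq_id (R := R) (A := A) X U
  rw [← LinearMap.id_comp u, ← hab, univ_sum_comp]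
  exact Finset.sum_eq_zero fun i _ => by
    rw [LinearMap.comp_assoc, hX (b i ∘ₗ u), LinearMap.comp_zero]

variable (h : SplitQH R A Λ Δ) (hc : IsCostandard R A Λ Δ Nb)
include h hc

/-- If no `Δ(μ)` with `μ > λ` maps nontrivially to `N`, then there is a homomorphism
`N → ∇(λ) ⊗ Hom_A(Δ(λ), N)` which becomes an isomorphism upon applying `Hom_A(Δ(λ), -)`. -/
lemma IsCostandard.exists_hom_tensor {N : Type} [AddCommGroup N] [Module R N]
    [Module A N] [IsScalarTower R A N] (l : Λ)
    [Module.Finite R (Δ l →ₗ[A] N)] [Module.Projective R (Δ l →ₗ[A] N)]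
    (hN : ∀ m, l < m → ∀ u : Δ m →ₗ[A] N, u = 0) :
    ∃ p : N →ₗ[A] Nb l ⊗[R] (Δ l →ₗ[A] N), (∀ g : Δ l →ₗ[A] N, p ∘ₗ g = 0 → g = 0) ∧
      ∀ u : Δ l →ₗ[A] Nb l ⊗[R] (Δ l →ₗ[A] N), ∃ g : Δ l →ₗ[A] N, p ∘ₗ g = u := by
  obtain ⟨n, v, q, hvq⟩ := Module.Projective.exists_dual_basis (R := R) (Δ l →ₗ[A] N)
  obtain ⟨e⟩ := hc.2.1 l
  choose k hk using fun i => hc.exists_hom h l e hN (q i)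
  have he : ∀ w, w = e w • e.symm 1 := fun w => by
    apply e.injective
    simp
  have hp : ∀ g, (∑ i, tensorIn R A (Nb l) (v i) ∘ₗ k i) ∘ₗ g =
      tensorIn R A (Nb l) g ∘ₗ e.symm 1 := by
    intro g
    conv_rhs => rw [← hvq g, map_sum, univ_sum_comp]
    rw [univ_sum_comp]
    refine Finset.sum_congr rfl fun i _ => ?_
    rw [LinearMap.comp_assoc, he (k i ∘ₗ g), hk]
    ext x
    simp
  refine ⟨∑ i, tensorIn R A (Nb l) (v i) ∘ₗ k i, fun g hg => ?_, fun u => ?_⟩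
  · rw [hp] at hg
    rw [← hvq g]
    refine Finset.sum_eq_zero fun i _ => ?_
    have h1 := congrArg (fun w => e (tensorOut A (Nb l) (q i) ∘ₗ w)) hg
    simp only [← LinearMap.comp_assoc, tensorOut_comp_tensorIn, LinearMap.comp_zero, map_zero,
      LinearMap.smul_comp, LinearMap.id_comp, map_smul, LinearEquiv.apply_symm_apply, smul_eq_mul,
      mul_one] at h1
    rw [h1, zero_smul]
  · refine ⟨∑ i, e (tensorOut A (Nb l) (q i) ∘ₗ u) • v i, ?_⟩
    rw [hp, map_sum, univ_sum_comp]
    conv_rhs => rw [← LinearMap.id_comp u, ← sum_tensorIn_comp_tensorOut v q hvq, univ_sum_comp]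
    refine Finset.sum_congr rfl fun i _ => ?_
    rw [LinearMap.comp_assoc]
    conv_rhs => rw [he (tensorOut A (Nb l) (q i) ∘ₗ u)]
    ext x
    simp

/-- A module, finitely generated and projective over `R`, without higher extensions by standard
modules has a costandard filtration. -/
theorem IsCostandard.inFilt_of_extZero [IsNoetherianRing R] (N : Type) [AddCommGroup N]
    [Module R N] [Module A N] [IsScalarTower R A N] [Module.Finite R N] [Module.Projective R N]
    (hN : ∀ l i, ExtZero A (Δ l) N (i + 1)) : InFilt R A Λ Nb Set.univ N := by
  suffices ∀ (N : Type) [AddCommGroup N]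
      [Module R N] [Module A N] [IsScalarTower R A N] [Module.Finite R N] [Module.Projective R N],
      (∀ l i, ExtZero A (Δ l) N (i + 1)) →
      (∀ m, m ∉ (Set.univ : Set Λ) → ∀ u : Δ m →ₗ[A] N, u = 0) →
      InFilt R A Λ Nb Set.univ N from this N hN fun m hm => (hm trivial).elim
  refine lowerSet_induction (p := fun B => ∀ (N : Type) [AddCommGroup N]
      [Module R N] [Module A N] [IsScalarTower R A N] [Module.Finite R N] [Module.Projective R N],
      (∀ l i, ExtZero A (Δ l) N (i + 1)) →
      (∀ m, m ∉ B → ∀ u : Δ m →ₗ[A] N, u = 0) → InFilt R A Λ Nb Set.univ N) ?_ ?_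
  · intro N _ _ _ _ _ _ _ hN
    have := h.subsingleton_of_hom_eq_zero fun m => hN m (Set.notMem_empty m)
    exact InFilt.of_subsingleton
  · intro B l hB hl hmax ih N _ _ _ _ _ _ hext hN
    have hN' : ∀ m, l < m → ∀ u : Δ m →ₗ[A] N, u = 0 := fun m hm => hN m (hmax m hm)
    obtain ⟨_, _⟩ := h.finProj_hom l hN'
    obtain ⟨p, hp0, hp⟩ := hc.exists_hom_tensor h l hN'
    obtain ⟨_, _⟩ := finProj_iff.1 (hc.finProj h l)
    have : Module.Finite A (Nb l) := Module.Finite.of_restrictScalars_finite R A _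
    have hten : InFilt R A Λ Nb Set.univ (Nb l ⊗[R] (Δ l →ₗ[A] N)) :=
      InFilt.tensor (Set.mem_univ l) _
    have hlift : ∀ m, ∀ u : Δ m →ₗ[A] Nb l ⊗[R] (Δ l →ₗ[A] N), ∃ v : Δ m →ₗ[A] N, p ∘ₗ v = u := by
      intro m u
      by_cases hm : m = l
      · subst hm
        exact hp u
      · exact ⟨0, by rw [hom_tensor_eq_zero (hc.2.2.1 m l hm) u, LinearMap.comp_zero]⟩
    have hsurj := h.surjective_of_lift p (fun m => hext m 0) hlift
    have s := IsSES.ker_subtype hsurj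
    have s' : IsSES ((LinearMap.ker p).subtype.restrictScalars R) (p.restrictScalars R) :=
      ⟨s.inj, s.exact, s.surj⟩
    have := s'.projective_left
    have : Module.Finite R (LinearMap.ker p) := Module.Finite.of_injective _ s'.inj
    refine InFilt.extension s (ih _ ?_ ?_) hten
    · rintro m (_ | i)
      · exact s.extZero_one_left' (hlift m) (hext m 0)
      · exact s.extZero_left' (hten.extZero_right fun l' _ => hc.extZero m l' i) (hext m (i + 1))
    · intro m hm u
      have hu : (LinearMap.ker p).subtype ∘ₗ u = 0 := by
        by_cases hmB : m ∈ B
        · have hml : m = l := by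
            by_contra hml
            exact hm ⟨hmB, hml⟩
          subst hml
          refine hp0 _ ?_
          ext x
          exact (u x).2
        · exact hN m hmB _
      ext x
      exact LinearMap.congr_fun hu x

end Recognition

end

noncomputable section

lemma IsSES.restrictScalars (R : Type) [CommRing R] {A : Type} [Ring A] [Algebra R A]
    {M' M M'' : Type} [AddCommGroup M'] [Module R M'] [Module A M'] [IsScalarTower R A M']
    [AddCommGroup M] [Module R M] [Module A M] [IsScalarTower R A M]
    [AddCommGroup M''] [Module R M''] [Module A M''] [IsScalarTower R A M'']
    {f : M' →ₗ[A] M} {g : M →ₗ[A] M''} (s : IsSES f g) :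
    IsSES (f.restrictScalars R) (g.restrictScalars R) :=
  ⟨s.inj, s.exact, s.surj⟩

section Coinduced

set_option linter.unusedSectionVars false

variable (R : Type) [CommRing R] (A : Type) [Ring A] [Algebra R A]

/-- The coinduced module `Hom_R(A, L)`, with `(a • f) b = f (b * a)`. -/
def Coinduced (L : Type) [AddCommGroup L] [Module R L] : Type := A →ₗ[R] L

variable {L : Type} [AddCommGroup L] [Module R L]

namespace Coinduced

instance : AddCommGroup (Coinduced R A L) := inferInstanceAs (AddCommGroup (A →ₗ[R] L))

instance : Module R (Coinduced R A L) := inferInstanceAs (Module R (A →ₗ[R] L))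

instance : FunLike (Coinduced R A L) A L := inferInstanceAs (FunLike (A →ₗ[R] L) A L)

instance : LinearMapClass (Coinduced R A L) R A L :=
  inferInstanceAs (LinearMapClass (A →ₗ[R] L) R A L)

variable {R A}

@[ext] lemma ext {f g : Coinduced R A L} (h : ∀ a, f a = g a) : f = g := LinearMap.ext h

@[simp] lemma add_apply (f g : Coinduced R A L) (a : A) : (f + g) a = f a + g a := rfl

@[simp] lemma zero_apply (a : A) : (0 : Coinduced R A L) a = 0 := rfl

@[simp] lemma smul_apply' (r : R) (f : Coinduced R A L) (a : A) : (r • f) a = r • f a := rfl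

instance : Module A (Coinduced R A L) where
  smul a f := (show A →ₗ[R] L from f) ∘ₗ LinearMap.mulRight R a
  one_smul f := ext fun b => congrArg f (mul_one b)
  mul_smul a a' f := ext fun b => congrArg f (mul_assoc b a a').symm
  smul_zero _ := rfl
  smul_add _ _ _ := rfl
  add_smul a a' f := ext fun b => (congrArg f (mul_add b a a')).trans (map_add f _ _)
  zero_smul f := ext fun b => (congrArg f (mul_zero b)).trans (map_zero f)

@[simp] lemma smul_apply (a : A) (f : Coinduced R A L) (b : A) : (a • f) b = f (b * a) := rfl

instance : IsScalarTower R A (Coinduced R A L) :=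
  ⟨fun r a f => ext fun b => by simp⟩

variable {X : Type} [AddCommGroup X] [Module R X] [Module A X] [IsScalarTower R A X]

/-- The `A`-homomorphism into the coinduced module attached to an `R`-homomorphism. -/
def lift (w : X →ₗ[R] L) : X →ₗ[A] Coinduced R A L where
  toFun x := w ∘ₗ (LinearMap.toSpanSingleton A X x).restrictScalars R
  map_add' x y := ext fun b => (congrArg w (smul_add b x y)).trans (map_add w _ _)
  map_smul' a x := ext fun b => congrArg w (mul_smul b a x).symm

@[simp] lemma lift_apply (w : X →ₗ[R] L) (x : X) (b : A) : lift w x b = w (b • x) := rfl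

/-- Evaluation at `1`. -/
def eval (u : X →ₗ[A] Coinduced R A L) : X →ₗ[R] L where
  toFun x := u x 1
  map_add' x y := by simp
  map_smul' r x := by
    have : u (r • x) = r • u x := (u.restrictScalars R).map_smul r x
    simp [this]

@[simp] lemma eval_apply (u : X →ₗ[A] Coinduced R A L) (x : X) : eval u x = u x 1 := rfl

instance [Module.Finite R A] [Module.Projective R A] [Module.Finite R L]
    [Module.Projective R L] : Module.Finite R (Coinduced R A L) :=
  (finProj_hom_of_projective (R := R) (A := R) (M := A) (N := L)).1

instance [Module.Finite R A] [Module.Projective R A] [Module.Finite R L]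
    [Module.Projective R L] : Module.Projective R (Coinduced R A L) :=
  (finProj_hom_of_projective (R := R) (A := R) (M := A) (N := L)).2

lemma extZero_one_of_isSES {M' M M'' : Type} [AddCommGroup M'] [Module R M'] [Module A M']
    [IsScalarTower R A M'] [AddCommGroup M] [Module R M] [Module A M] [IsScalarTower R A M]
    [AddCommGroup M''] [Module R M''] [Module A M''] [IsScalarTower R A M'']
    {f : M' →ₗ[A] M} {g : M →ₗ[A] M''} (s : IsSES f g) [Module.Projective A M]
    [Module.Projective R M''] : ExtZero A M'' (Coinduced R A L) 1 := by
  refine s.extZero_one_right (fun u => ?_) (ExtZero.of_projective 0)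
  obtain ⟨r, hr⟩ := (s.restrictScalars R).exists_retraction
  refine ⟨lift (eval u ∘ₗ r), LinearMap.ext fun x => ext fun b => ?_⟩
  have h1 : r (b • f x) = b • x := by
    rw [← map_smul]
    exact LinearMap.congr_fun hr (b • x)
  simp [h1]

/-- Coinduced modules are relatively injective. -/
lemma extZero [Module.Projective R A] (i : ℕ) (X : Type) [AddCommGroup X] [Module R X]
    [Module A X] [IsScalarTower R A X] [Module.Projective R X] :
    ExtZero A X (Coinduced R A L) (i + 1) := by
  induction i generalizing X with
  | zero =>
    have s := IsSES.ker_subtype (Finsupp.linearCombination_id_surjective A X)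
    exact extZero_one_of_isSES s
  | succ i ih =>
    have s := IsSES.ker_subtype (Finsupp.linearCombination_id_surjective A X)
    have s' := s.restrictScalars R
    classical
    have : Module.Projective R (X →₀ A) :=
      .of_equiv (finsuppLequivDFinsupp (ι := X) (M := A) R).symm
    have := s'.projective_left
    exact s.extZero_right (ih _) (ExtZero.of_projective (i + 1))

end Coinduced

end Coinduced

section Recognition

set_option linter.unusedSectionVars false

variable {R : Type} [CommRing R] {A : Type} [Ring A] [Algebra R A]
  {Λ : Type} [Fintype Λ] [PartialOrder Λ]
  {Δ : Λ → Type} [∀ l, AddCommGroup (Δ l)] [∀ l, Module R (Δ l)]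
  [∀ l, Module A (Δ l)] [∀ l, IsScalarTower R A (Δ l)]
  {Nb : Λ → Type} [∀ l, AddCommGroup (Nb l)] [∀ l, Module R (Nb l)]
  [∀ l, Module A (Nb l)] [∀ l, IsScalarTower R A (Nb l)]

lemma IsSES.projective_right_of_retraction {M' M M'' : Type} [AddCommGroup M'] [Module R M']
    [AddCommGroup M] [Module R M] [AddCommGroup M''] [Module R M''] {f : M' →ₗ[R] M}
    {g : M →ₗ[R] M''} (s : IsSES f g) [Module.Projective R M] (r : M →ₗ[R] M')
    (hr : r ∘ₗ f = LinearMap.id) : Module.Projective R M'' := by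
  obtain ⟨t, ht⟩ := s.exists_factor_right (LinearMap.id - f ∘ₗ r) (by
    rw [LinearMap.sub_comp, LinearMap.comp_assoc, hr, LinearMap.id_comp, LinearMap.comp_id,
      sub_self])
  refine Module.Projective.of_split t g ((LinearMap.cancel_right s.surj).1 ?_)
  rw [LinearMap.comp_assoc, ht]
  ext x
  simp [s.exact.apply_apply_eq_zero]

variable (h : SplitQH R A Λ Δ) (hc : IsCostandard R A Λ Δ Nb)
include h hc

/-- If no `Δ(μ)` with `μ > λ` maps nontrivially to `M`, then every homomorphism from
`Δ(λ) ⊗ Hom_A(Δ(λ), M)` to a costandard module extends along the evaluation map to `M`. -/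
lemma IsCostandard.exists_tensor_hom {M : Type} [AddCommGroup M] [Module R M]
    [Module A M] [IsScalarTower R A M] (l : Λ)
    [Module.Finite R (Δ l →ₗ[A] M)] [Module.Projective R (Δ l →ₗ[A] M)]
    (hM : ∀ m, l < m → ∀ u : Δ m →ₗ[A] M, u = 0) :
    ∃ j : Δ l ⊗[R] (Δ l →ₗ[A] M) →ₗ[A] M, (∀ g, j ∘ₗ tensorIn R A (Δ l) g = g) ∧
      ∀ m, ∀ u : Δ l ⊗[R] (Δ l →ₗ[A] M) →ₗ[A] Nb m, ∃ k : M →ₗ[A] Nb m, k ∘ₗ j = u := by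
  obtain ⟨n, v, q, hvq⟩ := Module.Projective.exists_dual_basis (R := R) (Δ l →ₗ[A] M)
  have hsum := sum_tensorIn_comp_tensorOut (R := R) (A := A) (X := Δ l) v q hvq
  refine ⟨∑ i, v i ∘ₗ tensorOut A (Δ l) (q i), fun g => ?_, fun m u => ?_⟩
  · conv_rhs => rw [← hvq g]
    rw [univ_sum_comp]
    refine Finset.sum_congr rfl fun i _ => ?_
    rw [LinearMap.comp_assoc, tensorOut_comp_tensorIn]
    ext x
    exact ((v i).restrictScalars R).map_smul (q i g) x
  · by_cases hm : l = m
    · subst hm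
      obtain ⟨e⟩ := hc.2.1 l
      obtain ⟨k, hk⟩ := hc.exists_hom h l e hM
        (e.toLinearMap ∘ₗ postcomp R (Δ l) u ∘ₗ tensorIn R A (Δ l))
      refine ⟨k, ?_⟩
      rw [← LinearMap.comp_id u, ← hsum, comp_univ_sum, comp_univ_sum]
      refine Finset.sum_congr rfl fun i _ => ?_
      rw [← LinearMap.comp_assoc, ← LinearMap.comp_assoc]
      congr 1
      exact e.injective (hk (v i))
    · refine ⟨0, ?_⟩
      rw [LinearMap.zero_comp, ← LinearMap.comp_id u, ← hsum, comp_univ_sum]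
      refine (Finset.sum_eq_zero fun i _ => ?_).symm
      rw [← LinearMap.comp_assoc, hc.2.2.1 l m hm (u ∘ₗ tensorIn R A (Δ l) (v i)),
        LinearMap.zero_comp]

/-- A module, finitely generated and projective over `R`, without higher extensions with costandard
modules has a standard filtration. -/
theorem IsCostandard.inFilt_standard_of_extZero [IsNoetherianRing R] (M : Type) [AddCommGroup M]
    [Module R M] [Module A M] [IsScalarTower R A M] [Module.Finite R M] [Module.Projective R M]
    (hM : ∀ l i, ExtZero A M (Nb l) (i + 1)) : InFilt R A Λ Δ Set.univ M := by
  suffices ∀ (M : Type) [AddCommGroup M]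
      [Module R M] [Module A M] [IsScalarTower R A M] [Module.Finite R M] [Module.Projective R M],
      (∀ l i, ExtZero A M (Nb l) (i + 1)) →
      (∀ m, m ∉ (Set.univ : Set Λ) → ∀ u : Δ m →ₗ[A] M, u = 0) →
      InFilt R A Λ Δ Set.univ M from this M hM fun m hm => (hm trivial).elim
  have := h.algFin
  have := h.algProj
  refine lowerSet_induction (p := fun B => ∀ (M : Type) [AddCommGroup M]
      [Module R M] [Module A M] [IsScalarTower R A M] [Module.Finite R M] [Module.Projective R M],
      (∀ l i, ExtZero A M (Nb l) (i + 1)) →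
      (∀ m, m ∉ B → ∀ u : Δ m →ₗ[A] M, u = 0) → InFilt R A Λ Δ Set.univ M) ?_ ?_
  · intro M _ _ _ _ _ _ _ hM
    have := h.subsingleton_of_hom_eq_zero fun m => hM m (Set.notMem_empty m)
    exact InFilt.of_subsingleton
  · intro B l hB hl hmax ih M _ _ _ _ _ _ hext hM
    have hM' : ∀ m, l < m → ∀ u : Δ m →ₗ[A] M, u = 0 := fun m hm => hM m (hmax m hm)
    obtain ⟨_, _⟩ := h.finProj_hom l hM'
    obtain ⟨j, hj, hjext⟩ := hc.exists_tensor_hom h l hM'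
    have := h.deltaFinA l
    have hten : InFilt R A Λ Δ Set.univ (Δ l ⊗[R] (Δ l →ₗ[A] M)) :=
      InFilt.tensor (Set.mem_univ l) _
    obtain ⟨_, _⟩ := finProj_iff.1 (hten.finProj fun m _ =>
      finProj_iff.2 ⟨h.deltaFinR m, h.deltaProjR m⟩)
    have hI : InFilt R A Λ Nb Set.univ (Coinduced R A (Δ l ⊗[R] (Δ l →ₗ[A] M))) :=
      hc.inFilt_of_extZero h _ fun m i => by
        have := h.deltaProjR m
        exact Coinduced.extZero i (Δ m)
    obtain ⟨v, hv⟩ := hI.exists_extend j (fun m _ => hext m 0) (fun m _ => hjext m)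
      (Coinduced.lift LinearMap.id)
    have hr : Coinduced.eval v ∘ₗ j.restrictScalars R = LinearMap.id := by
      refine LinearMap.ext fun x => ?_
      have h1 := congrArg (fun w : Coinduced R A (Δ l ⊗[R] (Δ l →ₗ[A] M)) => w 1)
        (LinearMap.congr_fun hv x)
      simpa using h1
    have hinj : Function.Injective j := fun x y hxy => by
      have hx := LinearMap.congr_fun hr x
      have hy := LinearMap.congr_fun hr y
      simp only [LinearMap.comp_apply, LinearMap.restrictScalars_apply, LinearMap.id_apply] at hx hy
      rw [← hx, hxy, hy]
    have s := IsSES.range_mkQ hinj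
    have s' := s.restrictScalars R
    have := s'.projective_right_of_retraction _ hr
    have : Module.Finite R (M ⧸ LinearMap.range j) := Module.Finite.of_surjective _ s'.surj
    refine InFilt.extension s hten (ih _ ?_ ?_)
    · rintro m (_ | i)
      · exact s.extZero_one_right (hjext m) (hext m 0)
      · exact s.extZero_right (hten.extZero_left fun l' _ => hc.extZero l' m i) (hext m (i + 1))
    · intro m hm u
      have := h.P_proj m
      obtain ⟨t, ht⟩ := Module.projective_lifting_property (LinearMap.range j).mkQ (u ∘ₗ h.epi m)
        s.surj
      suffices u ∘ₗ h.epi m = 0 from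
        (LinearMap.cancel_right (h.epi_surj m)).1 (this.trans (LinearMap.zero_comp _).symm)
      rw [← ht]
      by_cases hmB : m ∈ B
      · have hml : m = l := by
          by_contra hml
          exact hm ⟨hmB, hml⟩
        subst hml
        obtain ⟨w, rfl⟩ := (h.precomp_epi_bijective (R := R) (N := M) m hM').2 t
        rw [precomp_apply, ← hj w]
        ext x
        exact s.exact.apply_apply_eq_zero _
      · rw [h.hom_P_eq_zero m (fun m' hm' => hM m' fun hmB' => hmB (hB hm' hmB')) t,
          LinearMap.comp_zero]

end Recognition

end

noncomputable section

section SumFactors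

variable {A : Type} [Ring A] {M' M M'' P X : Type} [AddCommGroup M'] [Module A M']
  [AddCommGroup M] [Module A M] [AddCommGroup M''] [Module A M''] [AddCommGroup P] [Module A P]
  [AddCommGroup X] [Module A X]

variable (P) in
/-- `u` is a finite sum of homomorphisms factoring through `P`. -/
def SumFactors (u : M →ₗ[A] X) : Prop :=
  ∃ (ι : Type) (_ : Fintype ι) (a : ι → M →ₗ[A] P) (b : ι → P →ₗ[A] X), ∑ k, b k ∘ₗ a k = u

lemma SumFactors.of_comp (a : M →ₗ[A] P) (b : P →ₗ[A] X) : SumFactors P (b ∘ₗ a) :=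
  ⟨Unit, inferInstance, fun _ => a, fun _ => b, by simp⟩

lemma SumFactors.add {u v : M →ₗ[A] X} (hu : SumFactors P u) (hv : SumFactors P v) :
    SumFactors P (u + v) := by
  obtain ⟨ι, _, a, b, rfl⟩ := hu
  obtain ⟨κ, _, c, d, rfl⟩ := hv
  exact ⟨ι ⊕ κ, inferInstance, Sum.elim a c, Sum.elim b d, by simp⟩

lemma SumFactors.sum {ι : Type} [Fintype ι] {u : ι → M →ₗ[A] X} (hu : ∀ i, SumFactors P (u i)) :
    SumFactors P (∑ i, u i) := by
  choose κ _ a b hab using hu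
  refine ⟨Σ i, κ i, inferInstance, fun k => a k.1 k.2, fun k => b k.1 k.2, ?_⟩
  rw [Fintype.sum_sigma]
  exact Finset.sum_congr rfl fun i _ => hab i

lemma SumFactors.comp {u : M →ₗ[A] X} (hu : SumFactors P u) (v : M' →ₗ[A] M) :
    SumFactors P (u ∘ₗ v) := by
  obtain ⟨ι, _, a, b, rfl⟩ := hu
  exact ⟨ι, inferInstance, fun k => a k ∘ₗ v, b, by rw [univ_sum_comp]; rfl⟩

lemma IsSES.sumFactors {f : M' →ₗ[A] M} {g : M →ₗ[A] M''} (s : IsSES f g)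
    (hP : ExtZero A M'' P 1) (h' : ∀ u : M' →ₗ[A] X, SumFactors P u)
    (h'' : ∀ u : M'' →ₗ[A] X, SumFactors P u) (u : M →ₗ[A] X) : SumFactors P u := by
  obtain ⟨ι, _, a, b, hab⟩ := h' (u ∘ₗ f)
  choose c hca using fun k => s.exists_extend hP (a k)
  obtain ⟨v, hv⟩ := s.exists_factor_right (u - ∑ k, b k ∘ₗ c k) (by
    rw [LinearMap.sub_comp, univ_sum_comp, ← hab, sub_eq_zero]
    exact Finset.sum_congr rfl fun k _ => by rw [LinearMap.comp_assoc, hca])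
  rw [← sub_add_cancel u (∑ k, b k ∘ₗ c k), ← hv]
  exact ((h'' v).comp g).add ⟨ι, inferInstance, c, b, rfl⟩

lemma SumFactors.inAdd (hX : SumFactors P (LinearMap.id : X →ₗ[A] X)) : InAdd A P X := by
  obtain ⟨ι, _, a, b, hab⟩ := hX
  let e := Fintype.equivFin ι
  refine ⟨Fintype.card ι, LinearMap.pi fun i => a (e.symm i),
    ∑ i, b (e.symm i) ∘ₗ LinearMap.proj i, ?_⟩
  rw [univ_sum_comp, ← hab]
  exact e.symm.sum_comp fun k => b k ∘ₗ a k

end SumFactors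

section Pi

variable {A : Type} [Ring A] {Λ : Type} [Fintype Λ] {T : Λ → Type} [∀ l, AddCommGroup (T l)]
  [∀ l, Module A (T l)] {M : Type} [AddCommGroup M] [Module A M] {n : ℕ}

lemma extZero_pi_right : ExtZero A M (∀ l, T l) n ↔ ∀ l, ExtZero A M (T l) n := by
  classical
  refine ⟨fun hM l => ?_, fun hM => ?_⟩
  · refine ExtZero.of_sum_right (ι := Unit) (F := fun _ => ∀ l, T l) (fun _ => LinearMap.proj l)
      (fun _ => LinearMap.single A T l) ?_ fun _ => hM
    ext x
    simp
  · refine ExtZero.of_sum_right (fun l => LinearMap.single A T l) (fun l => LinearMap.proj l) ?_ hM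
    exact LinearMap.ext fun x => by simp [Finset.univ_sum_single]

lemma extZero_pi_left : ExtZero A (∀ l, T l) M n ↔ ∀ l, ExtZero A (T l) M n := by
  classical
  refine ⟨fun hM l => ?_, fun hM => ?_⟩
  · refine ExtZero.of_sum_left (ι := Unit) (F := fun _ => ∀ l, T l) (fun _ => LinearMap.proj l)
      (fun _ => LinearMap.single A T l) ?_ fun _ => hM
    ext x
    simp
  · refine ExtZero.of_sum_left (fun l => LinearMap.single A T l) (fun l => LinearMap.proj l) ?_ hM
    exact LinearMap.ext fun x => by simp [Finset.univ_sum_single]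

end Pi

section Tilting

set_option linter.unusedSectionVars false

variable {R : Type} [CommRing R] {A : Type} [Ring A] [Algebra R A]
  {Λ : Type} [Fintype Λ] [PartialOrder Λ]
  {Δ : Λ → Type} [∀ l, AddCommGroup (Δ l)] [∀ l, Module R (Δ l)]
  [∀ l, Module A (Δ l)] [∀ l, IsScalarTower R A (Δ l)]
  {Nb : Λ → Type} [∀ l, AddCommGroup (Nb l)] [∀ l, Module R (Nb l)]
  [∀ l, Module A (Nb l)] [∀ l, IsScalarTower R A (Nb l)]
  {T : Λ → Type} [∀ l, AddCommGroup (T l)] [∀ l, Module A (T l)]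
  (h : SplitQH R A Λ Δ) (hc : IsCostandard R A Λ Δ Nb) (hT : IsCharTilting R A Λ Δ Nb T)
  {M N : Type} [AddCommGroup M] [Module A M] [AddCommGroup N] [Module A N]

include h hT in
lemma IsCharTilting.inFilt_standard (l : Λ) : InFilt R A Λ Δ Set.univ (T l) := by
  obtain ⟨⟨f, hf, hX⟩, -⟩ := hT l
  have := h.deltaFinA l
  exact InFilt.extension (IsSES.range_mkQ hf) (InFilt.of_mem (Set.mem_univ l))
    (hX.mono (Set.subset_univ _))

include h hc in
lemma IsCostandard.finite (l : Λ) : Module.Finite A (Nb l) :=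
  have := (finProj_iff.1 (hc.finProj h l)).1
  Module.Finite.of_restrictScalars_finite R A _

include h hc hT in
lemma IsCharTilting.inFilt_costandard (l : Λ) : InFilt R A Λ Nb Set.univ (T l) := by
  obtain ⟨-, g, hg, hY⟩ := hT l
  have := hc.finite h l
  exact InFilt.extension (IsSES.ker_subtype hg) (hY.mono (Set.subset_univ _))
    (InFilt.of_mem (Set.mem_univ l))

include hc in
/-- Standard and costandard filtrations are orthogonal. -/
lemma IsCostandard.extZero_of_inFilt (hM : InFilt R A Λ Δ Set.univ M)
    (hN : InFilt R A Λ Nb Set.univ N) (i : ℕ) : ExtZero A M N (i + 1) :=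
  hM.extZero_left fun l _ => hN.extZero_right fun m _ => hc.extZero l m i

include hT in
lemma IsCharTilting.extZero_standard (hN : ∀ l i, ExtZero A (T l) N (i + 1)) (l : Λ) :
    ∀ i, ExtZero A (Δ l) N (i + 1) := by
  induction l using WellFoundedLT.induction with
  | ind l ih =>
    obtain ⟨⟨f, hf, hX⟩, -⟩ := hT l
    exact fun i => (IsSES.range_mkQ hf).extZero_left (hN l i)
      (hX.extZero_left fun m hm => ih m hm (i + 1))

include hT in
lemma IsCharTilting.extZero_costandard (hM : ∀ l i, ExtZero A M (T l) (i + 1)) (l : Λ) :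
    ∀ i, ExtZero A M (Nb l) (i + 1) := by
  induction l using WellFoundedLT.induction with
  | ind l ih =>
    obtain ⟨-, g, hg, hY⟩ := hT l
    exact fun i => (IsSES.ker_subtype hg).extZero_right' (hM l i)
      (hY.extZero_right fun m hm => ih m hm (i + 1))

include h hc hT in
/-- Homomorphisms between modules with a standard and a costandard filtration factor through
sums of copies of the characteristic tilting module. -/
lemma IsCharTilting.sumFactors (hM : InFilt R A Λ Δ Set.univ M)
    (hN : InFilt R A Λ Nb Set.univ N) (u : M →ₗ[A] N) : SumFactors (∀ l, T l) u := by
  classical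
  revert u
  refine And.right (a := ExtZero A M (∀ l, T l) 1) (hM.induction_on
    (motive := fun M _ _ => ExtZero A M (∀ l, T l) 1 ∧
      ∀ u : M →ₗ[A] N, SumFactors (∀ l, T l) u) ?_ ?_ ?_)
  · refine fun l _ => ⟨extZero_pi_right.2 fun m => (hT.inFilt_costandard h hc m).extZero_right
      fun m' _ => hc.extZero l m' 0, fun u => ?_⟩
    obtain ⟨⟨f, hf, hX⟩, -⟩ := hT l
    obtain ⟨v, rfl⟩ := (IsSES.range_mkQ hf).exists_extend
      (hc.extZero_of_inFilt (hX.mono (Set.subset_univ _)) hN 0) u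
    have hv : (v ∘ₗ LinearMap.proj l) ∘ₗ (LinearMap.single A T l ∘ₗ f) = v ∘ₗ f := by
      ext x
      simp
    exact hv ▸ SumFactors.of_comp _ _
  · refine fun n F _ _ M _ _ a b hab hF => ⟨ExtZero.of_sum_left a b hab fun i => (hF i).1,
      fun u => ?_⟩
    rw [← LinearMap.comp_id u, ← hab, comp_univ_sum]
    exact SumFactors.sum fun i => ((hF i).2 (u ∘ₗ a i)).comp (b i)
  · exact fun M' M M'' _ _ _ _ _ _ f g s h' h'' => ⟨s.extZero_mid h'.1 h''.1,
      s.sumFactors h''.1 h'.2 h''.2⟩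

include h in
lemma SplitQH.finProj_of_inFilt (hM : InFilt R A Λ Δ Set.univ M) : FinProj R A M :=
  hM.finProj fun l _ => finProj_iff.2 ⟨h.deltaFinR l, h.deltaProjR l⟩

include h hc in
lemma IsCostandard.finProj_of_inFilt (hN : InFilt R A Λ Nb Set.univ N) : FinProj R A N :=
  hN.finProj fun l _ => hc.finProj h l

end Tilting

end

noncomputable section

/-- Let `T = ⊕_λ T(λ)` be a characteristic tilting module. Then:
(a) `F(Δ̃) = {M ∈ A-mod ∩ R-proj : Ext^{i>0}_A(M, T) = 0}`;
(b) `F(∇̃) = {N ∈ A-mod ∩ R-proj : Ext^{i>0}_A(T, N) = 0}`;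
(c) `add T = F(Δ̃) ∩ F(∇̃)`. -/
theorem characteristic_tilting_determines_filtrations
    (R : Type) [CommRing R] [IsNoetherianRing R]
    (A : Type) [Ring A] [Algebra R A]
    (Λ : Type) [Fintype Λ] [PartialOrder Λ]
    (Δ : Λ → Type) [∀ l, AddCommGroup (Δ l)] [∀ l, Module R (Δ l)]
    [∀ l, Module A (Δ l)] [∀ l, IsScalarTower R A (Δ l)]
    (Nb : Λ → Type) [∀ l, AddCommGroup (Nb l)] [∀ l, Module R (Nb l)]
    [∀ l, Module A (Nb l)] [∀ l, IsScalarTower R A (Nb l)]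
    (h : SplitQH R A Λ Δ) (hc : IsCostandard R A Λ Δ Nb)
    (T : Λ → Type) [∀ l, AddCommGroup (T l)] [∀ l, Module A (T l)]
    (hT : IsCharTilting R A Λ Δ Nb T) :
    -- (a)
    (∀ (M : Type) [AddCommGroup M] [Module R M] [Module A M] [IsScalarTower R A M],
      InFilt R A Λ Δ Set.univ M ↔
        (Module.Finite A M ∧ Module.Projective R M ∧
          ∀ i : ℕ, 0 < i → extVanish A M (∀ l, T l) i)) ∧
    -- (b)
    (∀ (N : Type) [AddCommGroup N] [Module R N] [Module A N] [IsScalarTower R A N],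
      InFilt R A Λ Nb Set.univ N ↔
        (Module.Finite A N ∧ Module.Projective R N ∧
          ∀ i : ℕ, 0 < i → extVanish A (∀ l, T l) N i)) ∧
    -- (c)
    (∀ (X : Type) [AddCommGroup X] [Module A X],
      InAdd A (∀ l, T l) X ↔
        (InFilt R A Λ Δ Set.univ X ∧ InFilt R A Λ Nb Set.univ X)) := by
  have hΔT := hT.inFilt_standard h
  have hNT := hT.inFilt_costandard h hc
  have := h.algFin
  refine ⟨fun M _ _ _ _ => ⟨fun hM => ⟨hM.1, (finProj_iff.1 (h.finProj_of_inFilt hM)).2,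
    fun i hi => ?_⟩, fun ⟨_, _, hM⟩ => ?_⟩, fun N _ _ _ _ => ⟨fun hN => ⟨hN.1,
    (finProj_iff.1 (hc.finProj_of_inFilt h hN)).2, fun i hi => ?_⟩, fun ⟨_, _, hN⟩ => ?_⟩,
    fun X _ _ => ⟨fun hX => ?_, fun hX =>
      (hT.sumFactors h hc hX.1 hX.2 LinearMap.id).inAdd⟩⟩
  · obtain ⟨i, rfl⟩ := Nat.exists_eq_succ_of_ne_zero hi.ne'
    exact (extVanish_iff_extZero _ hi).2
      (extZero_pi_right.2 fun l => hc.extZero_of_inFilt hM (hNT l) i)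
  · have := Module.Finite.trans (R := R) A M
    refine hc.inFilt_standard_of_extZero h M (hT.extZero_costandard fun l i => ?_)
    exact extZero_pi_right.1 ((extVanish_iff_extZero _ i.succ_pos).1 (hM _ i.succ_pos)) l
  · obtain ⟨i, rfl⟩ := Nat.exists_eq_succ_of_ne_zero hi.ne'
    exact (extVanish_iff_extZero _ hi).2
      (extZero_pi_left.2 fun l => hc.extZero_of_inFilt (hΔT l) hN i)
  · have := Module.Finite.trans (R := R) A N
    refine hc.inFilt_of_extZero h N (hT.extZero_standard fun l i => ?_)
    exact extZero_pi_left.1 ((extVanish_iff_extZero _ i.succ_pos).1 (hN _ i.succ_pos)) l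
  · obtain ⟨n, a, b, hab⟩ := exists_sum_eq_id_of_inAdd hX
    have hXR : FinProj R A X := FinProj.of_sum_eq_id a b hab fun k => h.finProj_of_inFilt (hΔT k.2)
    let := moduleOfAlgebra R A X
    have := isScalarTower_moduleOfAlgebra (R := R) (A := A) X
    obtain ⟨_, _⟩ := hXR
    exact ⟨hc.inFilt_standard_of_extZero h X (hT.extZero_costandard fun l i =>
        ExtZero.of_sum_left a b hab fun k => hc.extZero_of_inFilt (hΔT k.2) (hNT l) i),
      hc.inFilt_of_extZero h X (hT.extZero_standard fun l i =>
        ExtZero.of_sum_right a b hab fun k => hc.extZero_of_inFilt (hΔT l) (hNT k.2) i)⟩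

end
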